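/- arXiv:1912.05406 — 7 statements merged into one kernel-verified Lean document; each statement's English description precedes it below -/
import Mathlib

section
/- For every integer n ≥ 1, if G is an induced subgraph of the n-dimensional hypercube graph Q_n on exactly 2^(n-1) + 1 vertices, then the maximum degree of G is at least √n. -/
/-- The hypercube graph `Q_n` on vertex set `{0,1}^n`: two vertices are adjacent
iff they differ in exactly one coordinate. -/
def Qgraph (n : ℕ) : SimpleGraph (Fin n → Bool) where
  Adj x y := (Finset.univ.filter fun i => x i ≠ y i).card = 1
  symm := by
    constructor
    intro x y h
    have h' : (Finset.univ.filter fun i => y i ≠ x i) =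
        (Finset.univ.filter fun i => x i ≠ y i) :=
      Finset.filter_congr fun i _ => ne_comm
    rw [h']
    exact h
  loopless := by
    constructor
    intro x h
    simp at h

instance QgraphDecidableAdj (n : ℕ) : DecidableRel (Qgraph n).Adj := fun x y =>
  inferInstanceAs (Decidable ((Finset.univ.filter fun i => x i ≠ y i).card = 1))

instance QgraphInduceDecidableAdj (n : ℕ) (S : Finset (Fin n → Bool)) :
    DecidableRel ((Qgraph n).induce (↑S : Set (Fin n → Bool))).Adj := fun a b =>
  QgraphDecidableAdj n a b

/-!
Each coordinate `i` gives a signed flip `E i` of the functions on the cube, with signs chosen so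
that `E i * E i = 1` and distinct `E i` anticommute. Their sum `A` is a signed adjacency operator
of `Q_n`, and the cross terms cancel in `A * A = n`. Multiplication by parity anticommutes with
`A` and so exchanges its eigenvalues `√n` and `-√n`, whence the `√n`-eigenspace has dimension at
least half of `2 ^ n`. It therefore contains a nonzero function `f` supported on any set `S` of more
than `2 ^ n / 2` vertices. At a vertex `x` where `|f|` is maximal, `√n * |f x| = |A f x|` is at
most the sum of `|f|` over the neighbours of `x` in `S`, hence at most `|f x|` times their number.
-/

theorem sum_mul_sum_eq_sum_mul_self_of_pairwise_anticomm {ι R : Type*} [NonUnitalNonAssocSemiring R]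
    (s : Finset ι) (e : ι → R)
    (anticomm : (s : Set ι).Pairwise fun i j => e i * e j + e j * e i = 0) :
    (∑ i ∈ s, e i) * ∑ i ∈ s, e i = ∑ i ∈ s, e i * e i := by
  classical
  have off_diagonal : ∑ p ∈ s.offDiag, e p.1 * e p.2 = 0 := by
    refine Finset.sum_involution (fun p _ => p.swap) ?_ ?_ ?_ ?_
    · intro p hp
      obtain ⟨h₁, h₂, hne⟩ := Finset.mem_offDiag.mp hp
      exact anticomm h₁ h₂ hne
    · intro p hp _ hswap
      exact (Finset.mem_offDiag.mp hp).2.2 (congrArg Prod.snd hswap)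
    · intro p hp
      obtain ⟨h₁, h₂, hne⟩ := Finset.mem_offDiag.mp hp
      exact Finset.mem_offDiag.mpr ⟨h₂, h₁, hne.symm⟩
    · exact fun p _ => p.swap_swap
  rw [Finset.sum_mul_sum, ← Finset.sum_product', ← Finset.diag_union_offDiag,
    Finset.sum_union (Finset.disjoint_diag_offDiag s), off_diagonal, add_zero, Finset.sum_diag]

theorem finrank_le_two_mul_finrank_eigenspace {K V : Type*} [Field K] [AddCommGroup V] [Module K V]
    [FiniteDimensional K V] {T P : Module.End K V} {c : K} (T_sq : T * T = algebraMap K _ (c * c))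
    (anticomm : T * P = -(P * T)) (P_injective : Function.Injective P) :
    Module.finrank K V ≤ 2 * Module.finrank K (T.eigenspace c) := by
  set C : Module.End K V := algebraMap K _ c
  have C_comm : C * P = P * C := Algebra.commutes c P
  have T_comm : Commute T C := (Algebra.commutes c T).symm
  have eigenspace_eq : T.eigenspace c = LinearMap.ker (T - C) := Module.End.eigenspace_def
  have annihilates : (T - C) * (P * (T - C)) = 0 := by
    calc (T - C) * (P * (T - C))
        = (T * P - C * P) * (T - C) := by rw [← mul_assoc, sub_mul]
      _ = -(P * ((T + C) * (T - C))) := by rw [anticomm, C_comm]; noncomm_ring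
      _ = -(P * (T * T - C * C)) := by rw [T_comm.mul_self_sub_mul_self_eq]
      _ = 0 := by rw [T_sq, map_mul, sub_self, mul_zero, neg_zero]
  have range_le : LinearMap.range (P * (T - C)) ≤ T.eigenspace c := by
    rw [eigenspace_eq, LinearMap.range_le_ker_iff]
    exact annihilates
  have ker_eq : LinearMap.ker (P * (T - C)) = T.eigenspace c := by
    rw [eigenspace_eq]
    exact LinearMap.ker_comp_of_ker_eq_bot _ (LinearMap.ker_eq_bot.mpr P_injective)
  calc Module.finrank K V
      = Module.finrank K (LinearMap.range (P * (T - C))) +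
          Module.finrank K (LinearMap.ker (P * (T - C))) :=
        (LinearMap.finrank_range_add_finrank_ker _).symm
    _ ≤ Module.finrank K (T.eigenspace c) + Module.finrank K (T.eigenspace c) :=
        add_le_add (Submodule.finrank_mono range_le) (Submodule.finrank_mono ker_eq.le)
    _ = 2 * Module.finrank K (T.eigenspace c) := (two_mul _).symm

theorem exists_mem_ne_zero_forall_notMem_eq_zero {K V : Type*} [DivisionRing K] [Fintype V]
    [DecidableEq V] (W : Submodule K (V → K)) (S : Finset V)
    (hS : Sᶜ.card < Module.finrank K W) :
    ∃ f ∈ W, f ≠ 0 ∧ ∀ x ∉ S, f x = 0 := by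
  let restrict : W →ₗ[K] ((Sᶜ : Finset V) → K) := (LinearMap.funLeft K K Subtype.val).comp W.subtype
  have ker_ne_bot : LinearMap.ker restrict ≠ ⊥ :=
    LinearMap.ker_ne_bot_of_finrank_lt <| by
      rwa [Module.finrank_fintype_fun_eq_card, Fintype.card_coe]
  obtain ⟨f, hf, hf0⟩ := Submodule.exists_mem_ne_zero_of_ne_bot ker_ne_bot
  exact ⟨f, f.2, fun h => hf0 (Subtype.ext h),
    fun x hx => congrFun (LinearMap.mem_ker.mp hf) ⟨x, Finset.mem_compl.mpr hx⟩⟩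

section MaxDegree

variable {V K M : Type*} [Fintype V] (G : SimpleGraph V) [DecidableRel G.Adj]

theorem le_maxDegree_of_forall_mul_le_sum_neighborFinset [Semiring K] [LinearOrder K]
    [IsStrictOrderedRing K] {c : K} {w : V → K} (w_pos : ∃ x, 0 < w x)
    (hw : ∀ x, c * w x ≤ ∑ y ∈ G.neighborFinset x, w y) : c ≤ G.maxDegree := by
  obtain ⟨z, hz⟩ := w_pos
  have : Nonempty V := ⟨z⟩
  obtain ⟨x, hx⟩ := Finite.exists_max w
  have le_degree : c ≤ G.degree x := by
    refine le_of_mul_le_mul_right ?_ (hz.trans_le (hx z))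
    calc c * w x ≤ ∑ y ∈ G.neighborFinset x, w y := hw x
      _ ≤ ∑ _y ∈ G.neighborFinset x, w x := Finset.sum_le_sum fun y _ => hx y
      _ = G.degree x * w x := by
        rw [Finset.sum_const, G.card_neighborFinset_eq_degree, nsmul_eq_mul]
  exact le_degree.trans (Nat.cast_le.mpr (G.degree_le_maxDegree x))

theorem sum_neighborFinset_induce [AddCommMonoid M] (S : Set V) [Fintype S]
    [DecidableRel (G.induce S).Adj] {w : V → M} (hw : ∀ x ∉ S, w x = 0) (x : S) :
    ∑ y ∈ (G.induce S).neighborFinset x, w y = ∑ y ∈ G.neighborFinset x, w y := by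
  classical
  have map_neighborFinset : ((G.induce S).neighborFinset x).map (.subtype (· ∈ S)) =
      {y ∈ G.neighborFinset x | y ∈ S} := by
    ext
    simp [and_comm]
  calc ∑ y ∈ (G.induce S).neighborFinset x, w y
      = ∑ y ∈ G.neighborFinset x with y ∈ S, w y := by
        rw [← map_neighborFinset, Finset.sum_map]
        rfl
    _ = ∑ y ∈ G.neighborFinset x, w y :=
        Finset.sum_filter_of_ne fun y _ hy => not_imp_comm.mp (hw y) hy

end MaxDegree

section Cube

variable {ι : Type*}

/-- The neighbour of the vertex `x` of the cube `ι → Bool` across the edge in direction `i`. -/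
def flipBit [DecidableEq ι] (i : ι) (x : ι → Bool) : ι → Bool :=
  Function.update x i (!x i)

/-- The Walsh character `x ↦ (-1) ^ #{j ∈ t | x j}` of the cube, valued in `ℤˣ` so that it acts on
every additive group. -/
def walsh (t : Finset ι) (x : ι → Bool) : ℤˣ :=
  ∏ j ∈ t, if x j then -1 else 1

section DecidableEq

variable [DecidableEq ι]

theorem flipBit_flipBit (i : ι) (x : ι → Bool) : flipBit i (flipBit i x) = x := by
  simp [flipBit]

theorem flipBit_comm (i j : ι) (x : ι → Bool) :
    flipBit i (flipBit j x) = flipBit j (flipBit i x) := by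
  rcases eq_or_ne i j with rfl | hij
  · rfl
  · simp only [flipBit, Function.update_of_ne hij, Function.update_of_ne hij.symm]
    exact Function.update_comm hij.symm _ _ _

theorem flipBit_left_injective (x : ι → Bool) : Function.Injective fun i => flipBit i x := by
  intro i j hij
  by_contra hne
  have := congrFun hij i
  simp [flipBit, Function.update_of_ne hne] at this

theorem walsh_flipBit_of_notMem {t : Finset ι} {i : ι} (hi : i ∉ t) (x : ι → Bool) :
    walsh t (flipBit i x) = walsh t x := by
  refine Finset.prod_congr rfl fun j hj => ?_
  rw [flipBit, Function.update_of_ne (ne_of_mem_of_not_mem hj hi)]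

theorem walsh_flipBit_of_mem {t : Finset ι} {i : ι} (hi : i ∈ t) (x : ι → Bool) :
    walsh t (flipBit i x) = -walsh t x := by
  have walsh_eq (y : ι → Bool) : walsh t y = (if y i then -1 else 1) * walsh (t.erase i) y :=
    (Finset.mul_prod_erase t _ hi).symm
  rw [walsh_eq, walsh_eq, walsh_flipBit_of_notMem (t.notMem_erase i)]
  cases h : x i <;> simp [flipBit, h]

end DecidableEq

/-- Multiplication by the parity character, as an operator on functions on the cube. -/
def parityMul (ι R : Type*) [Fintype ι] [Ring R] : Module.End R ((ι → Bool) → R) where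
  toFun f x := walsh Finset.univ x • f x
  map_add' f g := funext fun x => smul_add _ (f x) (g x)
  map_smul' c f := funext fun x => smul_comm _ c (f x)

theorem parityMul_apply {ι R : Type*} [Fintype ι] [Ring R] (f : (ι → Bool) → R) (x : ι → Bool) :
    parityMul ι R f x = walsh Finset.univ x • f x :=
  rfl

theorem parityMul_injective (ι R : Type*) [Fintype ι] [Ring R] :
    Function.Injective (parityMul ι R) :=
  fun _ _ hfg => funext fun x => smul_left_cancel _ (congrFun hfg x)

variable (R : Type*) [Ring R] [LinearOrder ι] [LocallyFiniteOrderBot ι]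

/-- The flip of the `i`-th coordinate acting on functions on the cube, with the sign that makes
the flips of distinct coordinates anticommute. -/
def signedFlip (i : ι) : Module.End R ((ι → Bool) → R) where
  toFun f x := walsh (Finset.Iio i) x • f (flipBit i x)
  map_add' f g := funext fun _ => smul_add _ (f _) (g _)
  map_smul' c f := funext fun _ => smul_comm _ c (f _)

theorem signedFlip_apply (i : ι) (f : (ι → Bool) → R) (x : ι → Bool) :
    signedFlip R i f x = walsh (Finset.Iio i) x • f (flipBit i x) :=
  rfl

theorem signedFlip_mul_self (i : ι) : signedFlip R i * signedFlip R i = 1 := by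
  refine LinearMap.ext fun f => funext fun x => ?_
  rw [Module.End.mul_apply, signedFlip_apply, signedFlip_apply,
    walsh_flipBit_of_notMem Finset.notMem_Iio_self, flipBit_flipBit, smul_smul,
    Int.units_mul_self, one_smul, Module.End.one_apply]

theorem signedFlip_mul_add_mul_of_lt {i j : ι} (hij : i < j) :
    signedFlip R i * signedFlip R j + signedFlip R j * signedFlip R i = 0 := by
  refine LinearMap.ext fun f => funext fun x => ?_
  have hi : i ∈ Finset.Iio j := Finset.mem_Iio.mpr hij
  have hj : j ∉ Finset.Iio i := fun h => hij.not_gt (Finset.mem_Iio.mp h)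
  simp only [LinearMap.add_apply, Module.End.mul_apply, Pi.add_apply, signedFlip_apply,
    walsh_flipBit_of_mem hi, walsh_flipBit_of_notMem hj, flipBit_comm j i, smul_smul, smul_neg,
    Units.neg_smul, mul_comm (walsh (Finset.Iio j) x), neg_add_cancel, LinearMap.zero_apply,
    Pi.zero_apply]

theorem signedFlip_mul_add_mul_of_ne {i j : ι} (hij : i ≠ j) :
    signedFlip R i * signedFlip R j + signedFlip R j * signedFlip R i = 0 := by
  rcases hij.lt_or_gt with h | h
  · exact signedFlip_mul_add_mul_of_lt R h
  · rw [add_comm, signedFlip_mul_add_mul_of_lt R h]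

theorem signedFlip_mul_parityMul [Fintype ι] (i : ι) :
    signedFlip R i * parityMul ι R = -(parityMul ι R * signedFlip R i) := by
  refine LinearMap.ext fun f => funext fun x => ?_
  simp only [Module.End.mul_apply, LinearMap.neg_apply, Pi.neg_apply, signedFlip_apply,
    parityMul_apply, walsh_flipBit_of_mem (Finset.mem_univ i), smul_smul, smul_neg, Units.neg_smul,
    mul_comm (walsh (Finset.Iio i) x)]

variable (ι) [Fintype ι]

/-- The adjacency operator of the cube with Huang's signs on the edges. -/
def signedAdj : Module.End R ((ι → Bool) → R) :=
  ∑ i, signedFlip R i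

theorem signedAdj_mul_self : signedAdj ι R * signedAdj ι R = Fintype.card ι := by
  rw [signedAdj, sum_mul_sum_eq_sum_mul_self_of_pairwise_anticomm _ _
    fun _ _ _ _ => signedFlip_mul_add_mul_of_ne R]
  simp [signedFlip_mul_self]

theorem signedAdj_mul_parityMul :
    signedAdj ι R * parityMul ι R = -(parityMul ι R * signedAdj ι R) := by
  simp only [signedAdj, Finset.sum_mul, Finset.mul_sum, signedFlip_mul_parityMul,
    Finset.sum_neg_distrib]

theorem two_pow_card_le_two_mul_finrank_eigenspace_signedAdj {K : Type*} [Field K] {c : K}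
    (hc : c * c = Fintype.card ι) :
    2 ^ Fintype.card ι ≤ 2 * Module.finrank K ((signedAdj ι K).eigenspace c) := by
  have signedAdj_sq : signedAdj ι K * signedAdj ι K = algebraMap K _ (c * c) := by
    rw [signedAdj_mul_self, hc, map_natCast]
  simpa using finrank_le_two_mul_finrank_eigenspace signedAdj_sq (signedAdj_mul_parityMul ι K)
    (parityMul_injective ι K)

variable {ι}

theorem exists_ne_zero_signedAdj_eq_smul_forall_notMem_eq_zero {K : Type*} [Field K] {c : K}
    (hc : c * c = Fintype.card ι) (S : Finset (ι → Bool))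
    (hS : 2 ^ Fintype.card ι < 2 * S.card) :
    ∃ f ≠ 0, signedAdj ι K f = c • f ∧ ∀ x ∉ S, f x = 0 := by
  have card_compl_lt : Sᶜ.card < Module.finrank K ((signedAdj ι K).eigenspace c) := by
    have half_le := two_pow_card_le_two_mul_finrank_eigenspace_signedAdj ι hc
    have card_add := S.card_add_card_compl
    rw [Fintype.card_fun, Fintype.card_bool] at card_add
    omega
  obtain ⟨f, f_mem, f_ne, f_support⟩ := exists_mem_ne_zero_forall_notMem_eq_zero _ S card_compl_lt
  exact ⟨f, f_ne, Module.End.mem_eigenspace_iff.mp f_mem, f_support⟩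

theorem norm_signedAdj_apply_le {E : Type*} [SeminormedRing E] (f : (ι → Bool) → E)
    (x : ι → Bool) : ‖signedAdj ι E f x‖ ≤ ∑ i, ‖f (flipBit i x)‖ := by
  rw [signedAdj, LinearMap.sum_apply, Finset.sum_apply]
  refine norm_sum_le_of_le _ fun i _ => ?_
  rw [signedFlip_apply, norm_units_zsmul]

end Cube

theorem Qgraph_adj_iff_exists_flipBit {n : ℕ} {x y : Fin n → Bool} :
    (Qgraph n).Adj x y ↔ ∃ i, flipBit i x = y := by
  change (Finset.univ.filter fun i => x i ≠ y i).card = 1 ↔ _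
  rw [Finset.card_eq_one]
  refine exists_congr fun i => ?_
  rw [Finset.ext_iff, funext_iff]
  refine forall_congr' fun j => ?_
  rcases eq_or_ne j i with rfl | hji
  · simp [flipBit, Bool.eq_not]
  · simp [flipBit, hji]

theorem Qgraph_neighborFinset {n : ℕ} (x : Fin n → Bool) :
    (Qgraph n).neighborFinset x = Finset.univ.map ⟨(flipBit · x), flipBit_left_injective x⟩ := by
  ext y
  simp [Qgraph_adj_iff_exists_flipBit]

theorem huang_sensitivity_general (n : ℕ) (S : Finset (Fin n → Bool)) (hS : 2 ^ n < 2 * S.card) :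
    Real.sqrt n ≤ (((Qgraph n).induce (↑S : Set (Fin n → Bool))).maxDegree : ℝ) := by
  obtain ⟨f, f_ne, eigen, f_support⟩ :=
    exists_ne_zero_signedAdj_eq_smul_forall_notMem_eq_zero (c := Real.sqrt n) (by simp) S
      (by simpa using hS)
  obtain ⟨z, hz⟩ := Function.ne_iff.mp f_ne
  have hzS : z ∈ S := by_contra fun h => hz (f_support z h)
  refine le_maxDegree_of_forall_mul_le_sum_neighborFinset _ (w := fun x => ‖f x‖)
    ⟨⟨z, hzS⟩, norm_pos_iff.mpr hz⟩ fun x => ?_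
  rw [sum_neighborFinset_induce (w := fun x => ‖f x‖) _ _
    fun y hy => norm_eq_zero.mpr (f_support y hy)]
  calc Real.sqrt n * ‖f x‖ = ‖signedAdj (Fin n) ℝ f x‖ := by
        rw [eigen, Pi.smul_apply, norm_smul, Real.norm_of_nonneg (Real.sqrt_nonneg _)]
    _ ≤ ∑ i, ‖f (flipBit i x)‖ := norm_signedAdj_apply_le f x
    _ = ∑ y ∈ (Qgraph n).neighborFinset x, ‖f y‖ := by
        simp only [Qgraph_neighborFinset, Finset.sum_map, Function.Embedding.coeFn_mk]

/-- Hao Huang's theorem: every induced subgraph of `Q_n` on `2^(n-1) + 1` vertices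
has maximum degree at least `√n`. -/
theorem huang_sensitivity (n : ℕ) (hn : 1 ≤ n) (S : Finset (Fin n → Bool))
    (hS : S.card = 2 ^ (n - 1) + 1) :
    Real.sqrt n ≤ (((Qgraph n).induce (↑S : Set (Fin n → Bool))).maxDegree : ℝ) := by
  have two_mul_pow : 2 * 2 ^ (n - 1) = 2 ^ n := mul_pow_sub_one (Nat.one_le_iff_ne_zero.mp hn) 2
  exact huang_sensitivity_general n S (by omega)
end

section
/- For every Boolean function f : {0,1}^n → {0,1}, the block sensitivity satisfies bs(f) ≤ 2·s(f)^4. -/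
/-- The real value of a bit: `true ↦ 1`, `false ↦ 0`. -/
def bval (b : Bool) : ℝ := if b then 1 else 0

/-- The sensitivity `s(f)` of a Boolean function `f : {0,1}^n → {0,1}`:
the maximum over inputs `x` of the number of coordinates `i` such that flipping
the `i`-th bit of `x` changes the value of `f`. -/
def sens {n : ℕ} (f : (Fin n → Bool) → Bool) : ℕ :=
  Finset.univ.sup fun x : Fin n → Bool =>
    (Finset.univ.filter fun i : Fin n => f (Function.update x i (!x i)) ≠ f x).card

/-- The block sensitivity `bs(f)` of a Boolean function `f : {0,1}^n → {0,1}`: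
the maximum `t` such that there are an input `x` and `t` pairwise disjoint nonempty
blocks `B₁, …, B_t` of coordinates, flipping any one of which changes the value of `f`. -/
noncomputable def blockSens {n : ℕ} (f : (Fin n → Bool) → Bool) : ℕ :=
  sSup {t : ℕ | ∃ x : Fin n → Bool, ∃ B : Fin t → Finset (Fin n),
    (∀ i, (B i).Nonempty) ∧ (∀ i j, i ≠ j → Disjoint (B i) (B j)) ∧
    (∀ i, f (fun k => if k ∈ B i then !x k else x k) ≠ f x)}

/-- A multivariate polynomial is multilinear if each variable occurs with exponent
at most 1 in every monomial. -/
def Multilinear {n : ℕ} (p : MvPolynomial (Fin n) ℝ) : Prop :=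
  ∀ m ∈ p.support, ∀ i : Fin n, m i ≤ 1

/-- A real polynomial `p` represents the Boolean function `f` if `p(x) = f(x)` for
all `x ∈ {0,1}^n`. -/
def Represents {n : ℕ} (p : MvPolynomial (Fin n) ℝ) (f : (Fin n → Bool) → Bool) : Prop :=
  ∀ x : Fin n → Bool, MvPolynomial.eval (fun i => bval (x i)) p = bval (f x)

/-- A real polynomial `p` approximates the Boolean function `f` if
`|p(x) − f(x)| < 1/3` for all `x ∈ {0,1}^n`. -/
def Approximates {n : ℕ} (p : MvPolynomial (Fin n) ℝ) (f : (Fin n → Bool) → Bool) : Prop :=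
  ∀ x : Fin n → Bool, |MvPolynomial.eval (fun i => bval (x i)) p - bval (f x)| < 1 / 3

/-!
Fix an input `x` and disjoint blocks `B₁, …, B_t` whose flips change `f x`, and read `f` around `x`
as a `±1`-valued function `F` of the set of flipped coordinates, represented by a multilinear
polynomial.

* By Huang's theorem, more than half of the vertices of an `m`-dimensional cube induce a subgraph
  with a vertex of degree at least `√m`: the cube has a signed adjacency matrix whose square is `m`
  and whose `√m`-eigenspace has dimension `2 ^ (m - 1)`, so some eigenvector is supported on the
  chosen vertices, and its largest entry forces the degree.
* Following Gotsman and Linial, if the top coefficient of `F` on a subcube does not vanish, then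
  `F` times the parity character is unbalanced there, so Huang's theorem applies to its larger
  fibre, whose edges are exactly the sensitive ones. Hence `deg F ≤ s(f) ^ 2`.
* Identifying the variables in each block does not raise the degree. On the diagonal the merged
  polynomial is a univariate `p` with `deg p ≤ s(f) ^ 2` and `p'(0) = -2 t`, and `|p| ≤ 1` on
  `[0, 1]`, since `p` averages values of `F`. Markov's inequality at the endpoint `0` gives
  `2 t ≤ 2 (deg p) ^ 2`, hence `t ≤ s(f) ^ 4`.
-/

namespace BlockSensitivity

open Finset Polynomial Module
open Function (Injective onFun)
open scoped symmDiff

section MultilinearCoeff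

variable {α β R : Type*} [DecidableEq α] [CommRing R]

/-- The coefficient of the monomial `∏ i ∈ S, x i` in the multilinear polynomial whose value at the
indicator vector of each finite set `T` is `F T`, computed by Möbius inversion. -/
def multilinearCoeff (F : Finset α → R) (S : Finset α) : R :=
  ∑ T ∈ S.powerset, (-1) ^ #(S \ T) * F T

/-- The multilinear polynomial that interpolates `F` has total degree at most `d`. -/
def HasDegreeLE (F : Finset α → R) (d : ℕ) : Prop :=
  ∀ S : Finset α, d < #S → multilinearCoeff F S = 0

lemma multilinearCoeff_empty (F : Finset α → R) : multilinearCoeff F ∅ = F ∅ := by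
  simp [multilinearCoeff]

lemma multilinearCoeff_insert (F : Finset α → R) {a : α} {S : Finset α} (ha : a ∉ S) :
    multilinearCoeff F (insert a S) =
      multilinearCoeff (fun T ↦ F (insert a T)) S - multilinearCoeff F S := by
  simp only [multilinearCoeff]
  rw [sum_powerset_insert ha, add_comm, sub_eq_add_neg, ← sum_neg_distrib]
  congr 1 <;> refine sum_congr rfl fun T hT ↦ ?_
  · rw [insert_sdiff_insert, sdiff_insert_of_notMem ha]
  · have haT : a ∉ T := fun h ↦ ha (mem_powerset.1 hT h)
    rw [insert_sdiff_of_notMem S haT, card_insert_of_notMem fun h ↦ ha (mem_sdiff.1 h).1]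
    ring

lemma multilinearCoeff_singleton (F : Finset α → R) (a : α) :
    multilinearCoeff F {a} = F {a} - F ∅ := by
  rw [← insert_empty_eq, multilinearCoeff_insert F (notMem_empty a)]
  simp only [multilinearCoeff_empty]

lemma multilinearCoeff_eq_zero_of_insert_eq {F : Finset α → R} {a : α} {S : Finset α} (ha : a ∈ S)
    (hF : ∀ T, F (insert a T) = F T) : multilinearCoeff F S = 0 := by
  rw [← insert_erase ha, multilinearCoeff_insert F (notMem_erase a S)]
  simp only [hF, sub_self]

lemma multilinearCoeff_map [DecidableEq β] (e : β ↪ α) (F : Finset α → R) (S : Finset β) :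
    multilinearCoeff F (S.map e) = multilinearCoeff (fun T ↦ F (T.map e)) S := by
  simp only [multilinearCoeff, map_eq_image]
  rw [powerset_image, sum_image (image_injective e.injective).injOn]
  refine sum_congr rfl fun T _ ↦ ?_
  rw [← image_sdiff _ _ e.injective, card_image_of_injective _ e.injective]

/-- The restriction to the diagonal `x i = X` of the multilinear polynomial that interpolates `F`
on the subsets of `A`. -/
noncomputable def diagonalPolynomial (F : Finset α → R) (A : Finset α) : R[X] :=
  ∑ S ∈ A.powerset, C (multilinearCoeff F S) * X ^ #S

lemma diagonalPolynomial_empty (F : Finset α → R) : diagonalPolynomial F ∅ = C (F ∅) := by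
  simp [diagonalPolynomial, multilinearCoeff_empty]

lemma diagonalPolynomial_insert (F : Finset α → R) {a : α} {A : Finset α} (ha : a ∉ A) :
    diagonalPolynomial F (insert a A) =
      (1 - X) * diagonalPolynomial F A + X * diagonalPolynomial (fun T ↦ F (insert a T)) A := by
  simp only [diagonalPolynomial]
  rw [sum_powerset_insert ha, mul_sum, mul_sum, ← sum_add_distrib, ← sum_add_distrib]
  refine sum_congr rfl fun T hT ↦ ?_
  have haT : a ∉ T := fun h ↦ ha (mem_powerset.1 hT h)
  rw [multilinearCoeff_insert F haT, card_insert_of_notMem haT, C_sub]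
  ring

lemma eval_one_diagonalPolynomial (F : Finset α → R) (A : Finset α) :
    (diagonalPolynomial F A).eval 1 = F A := by
  induction A using Finset.induction_on generalizing F with
  | empty => simp [diagonalPolynomial_empty]
  | insert a A ha ih => simp [diagonalPolynomial_insert F ha, ih]

lemma sum_multilinearCoeff (F : Finset α → R) (A : Finset α) :
    ∑ S ∈ A.powerset, multilinearCoeff F S = F A := by
  simpa [diagonalPolynomial, eval_finsetSum] using eval_one_diagonalPolynomial F A

lemma eval_zero_derivative_diagonalPolynomial (F : Finset α → R) (A : Finset α) :
    (derivative (diagonalPolynomial F A)).eval 0 = ∑ i ∈ A, (F {i} - F ∅) := by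
  rw [← coeff_zero_eq_eval_zero, coeff_derivative]
  simp [diagonalPolynomial, coeff_X_pow, ← sum_filter, eq_comm (a := 1),
    ← powersetCard_eq_filter, powersetCard_one, multilinearCoeff_singleton]

lemma HasDegreeLE.degree_diagonalPolynomial_le {F : Finset α → R} {d : ℕ} (hF : HasDegreeLE F d)
    (A : Finset α) : (diagonalPolynomial F A).degree ≤ d := by
  refine (degree_sum_le _ _).trans (Finset.sup_le fun S _ ↦ ?_)
  rcases lt_or_ge d #S with hS | hS
  · simp [hF S hS]
  · exact (degree_C_mul_X_pow_le _ _).trans (by exact_mod_cast hS)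

lemma abs_eval_diagonalPolynomial_le {F : Finset α → ℝ} {M : ℝ} (hF : ∀ T, |F T| ≤ M)
    (A : Finset α) {t : ℝ} (ht : t ∈ Set.Icc 0 1) : |(diagonalPolynomial F A).eval t| ≤ M := by
  induction A using Finset.induction_on generalizing F with
  | empty => simpa [diagonalPolynomial_empty] using hF ∅
  | insert a A ha ih =>
    -- The value is a convex combination of the values on the two facets of the cube `A ∪ {a}`.
    have h := convex_Icc (-M) M (abs_le.1 (ih hF)) (abs_le.1 (ih fun T ↦ hF (insert a T)))
      (sub_nonneg.2 ht.2) ht.1 (sub_add_cancel 1 t)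
    simpa [diagonalPolynomial_insert F ha, abs_le] using h

end MultilinearCoeff

section Merging

variable {α β R : Type*}

lemma exists_disjoint_of_card_lt {B : β → Finset α} (hB : Pairwise (onFun Disjoint B))
    {U : Finset α} {S : Finset β} (hUS : #U < #S) : ∃ i ∈ S, Disjoint U (B i) := by
  classical
  by_contra! hmeet
  have hdisj : (S : Set β).PairwiseDisjoint fun i ↦ U ∩ B i := fun i _ j _ hij ↦
    (hB hij).mono inter_subset_right inter_subset_right
  refine hUS.not_ge ?_
  calc #S ≤ #(S.biUnion fun i ↦ U ∩ B i) :=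
        card_le_card_biUnion hdisj fun i hi ↦ not_disjoint_iff_nonempty_inter.1 (hmeet i hi)
    _ ≤ #U := card_le_card (biUnion_subset.2 fun _ _ ↦ inter_subset_left)

variable [DecidableEq α] [DecidableEq β] [CommRing R]

lemma multilinearCoeff_comp_biUnion (F : Finset α → R) (B : β → Finset α) (S : Finset β) :
    multilinearCoeff (fun T ↦ F (T.biUnion B)) S =
      ∑ U ∈ (S.biUnion B).powerset, multilinearCoeff F U *
        multilinearCoeff (fun T ↦ if U ⊆ T.biUnion B then 1 else 0) S := by
  have expand : ∀ T ∈ S.powerset, F (T.biUnion B) =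
      ∑ U ∈ (S.biUnion B).powerset, multilinearCoeff F U * if U ⊆ T.biUnion B then 1 else 0 := by
    intro T hT
    have hsub : T.biUnion B ⊆ S.biUnion B := biUnion_subset_biUnion_of_subset_left B
      (mem_powerset.1 hT)
    simp only [mul_ite, mul_one, mul_zero]
    rw [← sum_multilinearCoeff F (T.biUnion B), ← sum_filter]
    congr 1
    ext U
    simpa using fun h : U ⊆ T.biUnion B ↦ h.trans hsub
  rw [multilinearCoeff, sum_congr rfl fun T hT ↦ by rw [expand T hT]]
  simp only [multilinearCoeff, mul_sum (S.powerset), mul_sum ((S.biUnion B).powerset)]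
  rw [sum_comm]
  exact sum_congr rfl fun U _ ↦ sum_congr rfl fun T _ ↦ mul_left_comm _ _ _

lemma HasDegreeLE.comp_biUnion {F : Finset α → R} {d : ℕ} (hF : HasDegreeLE F d)
    {B : β → Finset α} (hB : Pairwise (onFun Disjoint B)) :
    HasDegreeLE (fun T ↦ F (T.biUnion B)) d := by
  intro S hS
  rw [multilinearCoeff_comp_biUnion]
  refine sum_eq_zero fun U _ ↦ ?_
  rcases lt_or_ge d #U with hU | hU
  · rw [hF U hU, zero_mul]
  obtain ⟨i, hiS, hUi⟩ := exists_disjoint_of_card_lt hB (hU.trans_lt hS)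
  rw [multilinearCoeff_eq_zero_of_insert_eq hiS, mul_zero]
  intro T
  simp only [biUnion_insert, ← sdiff_le_iff, ← sup_eq_union, hUi.sdiff_eq_left]

end Merging

section Markov

lemma neg_eval_zero_derivative_le {P : ℝ[X]} {d : ℕ} (hdeg : P.degree ≤ d)
    (hP : ∀ t ∈ Set.Icc (0 : ℝ) 1, |P.eval t| ≤ 1) :
    -(derivative P).eval 0 ≤ 2 * d ^ 2 := by
  set Q : ℝ[X] := P.comp (C (1 / 2) * (1 - X)) with hQ
  have hQdeg : Q.degree ≤ d := by
    refine degree_le_of_natDegree_le (natDegree_comp_le.trans ?_)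
    have hlin : (C (1 / 2 : ℝ) * (1 - X)).natDegree ≤ 1 := by compute_degree
    simpa using Nat.mul_le_mul (natDegree_le_of_degree_le hdeg) hlin
  have hQbound : ∀ x ∈ Set.Icc (-1 : ℝ) 1, |Q.eval x| ≤ 1 := by
    rintro x ⟨hx₁, hx₂⟩
    rw [hQ, eval_comp]
    refine hP _ ?_
    simp only [eval_mul, eval_C, eval_sub, eval_one, eval_X]
    constructor <;> linarith
  have hQderiv : (derivative Q).eval 1 = -(1 / 2) * (derivative P).eval 0 := by
    simp [hQ, derivative_comp, eval_comp]
  have hmarkov := Chebyshev.eval_iterate_derivative_le_of_forall_abs_le_one (k := 1) le_rfl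
    hQdeg hQbound
  simp only [Function.iterate_one, Chebyshev.derivative_T_eval_one, hQderiv] at hmarkov
  push_cast at hmarkov
  linarith

lemma HasDegreeLE.card_le_sq {α : Type*} [DecidableEq α] {F : Finset α → ℝ} {d : ℕ}
    (hd : HasDegreeLE F d) (hF : ∀ T, |F T| ≤ 1) (hempty : F ∅ = 1) {A : Finset α}
    (hsingleton : ∀ i ∈ A, F {i} = -1) : #A ≤ d ^ 2 := by
  have hderiv : (derivative (diagonalPolynomial F A)).eval 0 = -2 * #A := by
    rw [eval_zero_derivative_diagonalPolynomial,
      sum_congr rfl fun i hi ↦ by rw [hsingleton i hi, hempty], sum_const, nsmul_eq_mul]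
    ring
  have hmarkov := neg_eval_zero_derivative_le (hd.degree_diagonalPolynomial_le A)
    fun t ht ↦ abs_eval_diagonalPolynomial_le hF A ht
  rw [hderiv] at hmarkov
  have hcast : (#A : ℝ) ≤ d ^ 2 := by linarith
  exact_mod_cast hcast

end Markov

section LinearAlgebra

variable {K : Type*} [Field K]

lemma finrank_le_two_mul_finrank_eigenspace {V : Type*} [AddCommGroup V] [Module K V]
    [FiniteDimensional K V] {A D : End K V} {r : K} (hA : A * A = (r * r) • 1)
    (hAD : A * D = -(D * A)) (hD : Injective D) :
    finrank K V ≤ 2 * finrank K (A.eigenspace r) := by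
  have hrange : LinearMap.range (A + r • 1) ≤ A.eigenspace r := by
    rintro _ ⟨v, rfl⟩
    have hAv : A (A v) = (r * r) • v := LinearMap.congr_fun hA v
    simp [hAv, mul_smul, add_comm]
  have hker : ∀ v ∈ LinearMap.ker (A + r • 1), D v ∈ A.eigenspace r := by
    intro v hv
    have hAv : A v = -(r • v) := eq_neg_of_add_eq_zero_left (by simpa using hv)
    have hADv : A (D v) = -D (A v) := LinearMap.congr_fun hAD v
    simp [hADv, hAv]
  have hker_le : finrank K (LinearMap.ker (A + r • 1)) ≤ finrank K (A.eigenspace r) :=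
    LinearMap.finrank_le_finrank_of_injective (f := D.restrict hker) fun v w hvw ↦
      Subtype.ext (hD (congrArg Subtype.val hvw))
  calc finrank K V = finrank K (LinearMap.range (A + r • 1)) +
        finrank K (LinearMap.ker (A + r • 1)) :=
        (LinearMap.finrank_range_add_finrank_ker _).symm
    _ ≤ finrank K (A.eigenspace r) + finrank K (A.eigenspace r) :=
        add_le_add (Submodule.finrank_mono hrange) hker_le
    _ = 2 * finrank K (A.eigenspace r) := (two_mul _).symm

lemma exists_mem_ne_zero_forall_notMem_eq_zero {ι : Type*} [Fintype ι] [DecidableEq ι]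
    {E : Submodule K (ι → K)} {H : Finset ι} (hcard : #Hᶜ < finrank K E) :
    ∃ v ∈ E, v ≠ 0 ∧ ∀ i ∉ H, v i = 0 := by
  let restrict : E →ₗ[K] (↥Hᶜ → K) := (LinearMap.funLeft K K Subtype.val).comp E.subtype
  have hker : LinearMap.ker restrict ≠ ⊥ := by
    refine restrict.ker_ne_bot_of_finrank_lt ?_
    rwa [finrank_fintype_fun_eq_card, Fintype.card_coe]
  obtain ⟨v, hv, hv0⟩ := (Submodule.ne_bot_iff _).1 hker
  refine ⟨v, v.2, by simpa using hv0, fun i hi ↦ ?_⟩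
  exact congrFun (LinearMap.mem_ker.1 hv) ⟨i, mem_compl.2 hi⟩

end LinearAlgebra

section FiniteSums

variable {ι : Type*} [Fintype ι]

lemma sum_sum_eq_sum_diag {M : Type*} [AddCommMonoid M] {g : ι → ι → M}
    (hg : ∀ i j, i ≠ j → g i j + g j i = 0) : ∑ i, ∑ j, g i j = ∑ i, g i i := by
  classical
  have hoffDiag : ∑ p ∈ univ.offDiag, g p.1 p.2 = 0 := by
    refine sum_involution (fun p _ ↦ p.swap) (fun p hp ↦ hg _ _ (mem_offDiag.1 hp).2.2)
      (fun p hp _ hswap ↦ (mem_offDiag.1 hp).2.2 (congrArg Prod.snd hswap)) ?_ ?_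
    · simp [eq_comm]
    · simp
  rw [← sum_product', ← diag_union_offDiag, sum_union (disjoint_diag_offDiag _), hoffDiag,
    add_zero, sum_diag]

lemma exists_card_lt_two_mul_card_fiber {G : ι → ℝ} (hG : ∀ i, |G i| = 1) (hsum : ∑ i, G i ≠ 0) :
    ∃ c, Fintype.card ι < 2 * #{i | G i = c} := by
  have hvalue : ∀ i, G i = 1 ∨ G i = -1 := fun i ↦ (abs_eq zero_le_one).1 (hG i)
  have hcard : Fintype.card ι = #{i | G i = 1} + #{i | G i = -1} := by
    rw [← card_univ, ← card_filter_add_card_filter_not (fun i ↦ G i = 1)]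
    congr 2 with i
    rcases hvalue i with h | h <;> norm_num [h]
  have hdiff : ∑ i, G i = #{i | G i = 1} - #{i | G i = -1} := by
    simp only [card_filter, Nat.cast_sum, ← sum_sub_distrib]
    refine sum_congr rfl fun i _ ↦ ?_
    rcases hvalue i with h | h <;> norm_num [h]
  by_contra! hle
  have hpos := hle 1
  have hneg := hle (-1)
  refine hsum ?_
  rw [hdiff, sub_eq_zero]
  norm_cast
  lia

end FiniteSums

section Huang

variable {α : Type*}

lemma neg_one_pow_card_symmDiff {R : Type*} [CommRing R] [DecidableEq α] (S T : Finset α) :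
    (-1 : R) ^ #(S ∆ T) = (-1) ^ #S * (-1) ^ #T := by
  have hcard : #(S ∆ T) + 2 * #(S ∩ T) = #S + #T := by
    rw [symmDiff_def, sup_eq_union, card_union_of_disjoint disjoint_sdiff_sdiff]
    have hS := card_sdiff_add_card_inter S T
    have hT := card_sdiff_add_card_inter T S
    rw [inter_comm] at hT
    lia
  rw [← pow_add, ← hcard, pow_add, pow_mul]
  simp

open Classical in
/-- Huang's sign of the hypercube edge between `T` and `T ∆ {i}`, with respect to an arbitrary
linear order of the coordinates. -/
noncomputable def edgeSign (i : α) (T : Finset α) : ℝ :=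
  (-1) ^ #{j ∈ T | WellOrderingRel j i}

lemma edgeSign_mul_self (i : α) (T : Finset α) : edgeSign i T * edgeSign i T = 1 := by
  simp [edgeSign, ← mul_pow]

lemma abs_edgeSign (i : α) (T : Finset α) : |edgeSign i T| = 1 := by
  simp [edgeSign]

variable [DecidableEq α]

open Classical in
lemma edgeSign_symmDiff_singleton (i j : α) (T : Finset α) :
    edgeSign i (T ∆ {j}) = edgeSign i T * if WellOrderingRel j i then -1 else 1 := by
  have hfilter : ({k ∈ T ∆ {j} | WellOrderingRel k i} : Finset α) =
      {k ∈ T | WellOrderingRel k i} ∆ {k ∈ ({j} : Finset α) | WellOrderingRel k i} := by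
    ext k
    simp only [mem_filter, mem_symmDiff]
    tauto
  rw [edgeSign, hfilter, neg_one_pow_card_symmDiff, filter_singleton, edgeSign]
  split_ifs <;> simp

-- Every square of the cube has an odd number of negative edges.
lemma edgeSign_mul_edgeSign_symmDiff {i j : α} (hij : i ≠ j) (T : Finset α) :
    edgeSign i T * edgeSign j (T ∆ {i}) = -(edgeSign j T * edgeSign i (T ∆ {j})) := by
  rw [edgeSign_symmDiff_singleton, edgeSign_symmDiff_singleton]
  rcases trichotomous_of WellOrderingRel i j with h | h | h
  · rw [if_pos h, if_neg (asymm h)]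
    ring
  · exact absurd h hij
  · rw [if_pos h, if_neg (asymm h)]
    ring

variable [Fintype α]

/-- Huang's signed adjacency matrix of the hypercube, acting on functions of its vertices. -/
noncomputable def signedAdjacency : End ℝ (Finset α → ℝ) :=
  LinearMap.pi fun T ↦ ∑ i, edgeSign i T • LinearMap.proj (T ∆ {i})

lemma signedAdjacency_apply (v : Finset α → ℝ) (T : Finset α) :
    signedAdjacency v T = ∑ i, edgeSign i T * v (T ∆ {i}) := by
  simp [signedAdjacency]

lemma signedAdjacency_mul_self :
    (signedAdjacency : End ℝ (Finset α → ℝ)) * signedAdjacency = (Fintype.card α : ℝ) • 1 := by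
  refine LinearMap.ext fun v ↦ funext fun T ↦ ?_
  have hanti : ∀ i j, i ≠ j →
      edgeSign i T * (edgeSign j (T ∆ {i}) * v (T ∆ {i} ∆ {j})) +
        edgeSign j T * (edgeSign i (T ∆ {j}) * v (T ∆ {j} ∆ {i})) = 0 := by
    intro i j hij
    rw [← mul_assoc, edgeSign_mul_edgeSign_symmDiff hij, symmDiff_right_comm]
    ring
  have hdiag : ∀ i, edgeSign i T * (edgeSign i (T ∆ {i}) * v (T ∆ {i} ∆ {i})) = v T := by
    intro i
    rw [edgeSign_symmDiff_singleton, if_neg (irrefl i), symmDiff_symmDiff_cancel_right, mul_one,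
      ← mul_assoc, edgeSign_mul_self, one_mul]
  simp only [End.mul_apply, signedAdjacency_apply, mul_sum]
  rw [sum_sum_eq_sum_diag hanti]
  simp only [hdiag, sum_const, card_univ, nsmul_eq_mul, LinearMap.smul_apply, End.one_apply,
    Pi.smul_apply, smul_eq_mul]

lemma two_pow_card_le_two_mul_finrank_eigenspace {r : ℝ} (hr : r * r = Fintype.card α) :
    2 ^ Fintype.card α ≤
      2 * finrank ℝ ((signedAdjacency : End ℝ (Finset α → ℝ)).eigenspace r) := by
  -- Multiplication by the parity character exchanges the eigenspaces of `r` and `-r`.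
  let parity : Finset α → ℝ := fun T ↦ (-1) ^ #T
  have hanti : signedAdjacency * LinearMap.mulLeft ℝ parity =
      -(LinearMap.mulLeft ℝ parity * signedAdjacency) := by
    refine LinearMap.ext fun v ↦ funext fun T ↦ ?_
    simp [parity, signedAdjacency_apply, neg_one_pow_card_symmDiff, mul_sum, mul_left_comm]
  have hinj : Injective (LinearMap.mulLeft ℝ parity) := by
    refine Function.LeftInverse.injective (g := LinearMap.mulLeft ℝ parity) fun v ↦ ?_
    ext T
    simp [parity, ← mul_assoc, ← mul_pow]
  have h := finrank_le_two_mul_finrank_eigenspace (hr ▸ signedAdjacency_mul_self) hanti hinj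
  rwa [finrank_fintype_fun_eq_card, Fintype.card_finset] at h

lemma exists_abs_eigenvalue_le_card_neighbors {r : ℝ} {v : Finset α → ℝ}
    (hv : signedAdjacency v = r • v) (hv0 : v ≠ 0) {H : Finset (Finset α)}
    (hsupp : ∀ T ∉ H, v T = 0) : ∃ T ∈ H, |r| ≤ #{i | T ∆ {i} ∈ H} := by
  obtain ⟨T, -, hmax⟩ := exists_max_image univ (fun T ↦ |v T|) univ_nonempty
  have hvT : 0 < |v T| := by
    obtain ⟨T', hT'⟩ := Function.ne_iff.1 hv0
    exact (abs_pos.2 hT').trans_le (hmax T' (mem_univ _))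
  refine ⟨T, not_imp_comm.1 (hsupp T) (abs_pos.1 hvT), le_of_mul_le_mul_right ?_ hvT⟩
  calc |r| * |v T| = |∑ i, edgeSign i T * v (T ∆ {i})| := by
        rw [← signedAdjacency_apply, hv, Pi.smul_apply, smul_eq_mul, abs_mul]
    _ ≤ ∑ i, |edgeSign i T * v (T ∆ {i})| := abs_sum_le_sum_abs _ _
    _ = ∑ i, |v (T ∆ {i})| := by simp only [abs_mul, abs_edgeSign, one_mul]
    _ ≤ ∑ i, if T ∆ {i} ∈ H then |v T| else 0 := by
        refine sum_le_sum fun i _ ↦ ?_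
        split_ifs with h
        · exact hmax _ (mem_univ _)
        · rw [hsupp _ h, abs_zero]
    _ = #{i | T ∆ {i} ∈ H} * |v T| := by rw [← sum_filter, sum_const, nsmul_eq_mul]

theorem exists_card_le_sq_card_neighbors {H : Finset (Finset α)}
    (hH : 2 ^ Fintype.card α < 2 * #H) :
    ∃ T ∈ H, Fintype.card α ≤ #{i | T ∆ {i} ∈ H} ^ 2 := by
  set r : ℝ := √(Fintype.card α)
  have hrr : r * r = Fintype.card α := Real.mul_self_sqrt (Nat.cast_nonneg _)
  have hfinrank := two_pow_card_le_two_mul_finrank_eigenspace hrr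
  have hcompl : #H + #Hᶜ = 2 ^ Fintype.card α := by
    rw [card_add_card_compl, Fintype.card_finset]
  obtain ⟨v, hvE, hv0, hsupp⟩ := exists_mem_ne_zero_forall_notMem_eq_zero (H := H)
    (E := (signedAdjacency : End ℝ (Finset α → ℝ)).eigenspace r) (by lia)
  obtain ⟨T, hTH, hle⟩ := exists_abs_eigenvalue_le_card_neighbors
    (End.mem_eigenspace_iff.1 hvE) hv0 hsupp
  refine ⟨T, hTH, ?_⟩
  exact_mod_cast (Real.sqrt_le_left (Nat.cast_nonneg _)).1 ((le_abs_self r).trans hle)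

end Huang

section DegreeSensitivity

variable {α : Type*} [DecidableEq α] [Fintype α]

theorem exists_card_le_sq_card_sensitive {F : Finset α → ℝ} (hF : ∀ T, |F T| = 1)
    (hcoeff : multilinearCoeff F univ ≠ 0) :
    ∃ T, Fintype.card α ≤ #{i | F (T ∆ {i}) ≠ F T} ^ 2 := by
  let G : Finset α → ℝ := fun T ↦ (-1) ^ #(univ \ T) * F T
  have hG : ∀ T, |G T| = 1 := fun T ↦ by simp [G, abs_mul, hF]
  have hsum : ∑ T, G T ≠ 0 := by simpa only [multilinearCoeff, powerset_univ] using hcoeff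
  obtain ⟨c, hc⟩ := exists_card_lt_two_mul_card_fiber hG hsum
  rw [Fintype.card_finset] at hc
  obtain ⟨T, hT, hle⟩ := exists_card_le_sq_card_neighbors hc
  refine ⟨T, hle.trans (Nat.pow_le_pow_left (card_le_card fun i hi ↦ ?_) 2)⟩
  simp only [mem_filter, mem_univ, true_and] at hT hi ⊢
  intro hFi
  have hcompl : univ \ (T ∆ {i}) = (univ \ T) ∆ {i} := by
    ext j
    simp only [mem_sdiff, mem_univ, mem_symmDiff, true_and]
    tauto
  have hflip : G (T ∆ {i}) = -G T := by
    simp only [G, hcompl, hFi, neg_one_pow_card_symmDiff, card_singleton]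
    ring
  have hzero : G T = 0 := by linarith
  simpa [hzero] using hG T

lemma hasDegreeLE_sq_of_card_sensitive_le {F : Finset α → ℝ} (hF : ∀ T, |F T| = 1) {s : ℕ}
    (hs : ∀ T, #{i | F (T ∆ {i}) ≠ F T} ≤ s) : HasDegreeLE F (s ^ 2) := by
  intro U hU
  by_contra hcoeff
  let incl : U ↪ α := Function.Embedding.subtype _
  have hrestrict : multilinearCoeff (fun T : Finset U ↦ F (T.map incl)) univ ≠ 0 := by
    rwa [← multilinearCoeff_map, univ_eq_attach, attach_map_val]
  obtain ⟨T, hT⟩ := exists_card_le_sq_card_sensitive (fun T ↦ hF (T.map incl)) hrestrict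
  rw [Fintype.card_coe] at hT
  refine hU.not_ge (hT.trans (Nat.pow_le_pow_left (le_trans ?_ (hs (T.map incl))) 2))
  rw [← card_map incl]
  refine card_le_card fun i hi ↦ ?_
  obtain ⟨j, hj, rfl⟩ := mem_map.1 hi
  have hmap : (T ∆ {j}).map incl = T.map incl ∆ {incl j} := by
    simp only [map_eq_image, image_symmDiff _ _ incl.injective, image_singleton]
  simpa [hmap] using hj

end DegreeSensitivity

section BlockFlip

variable {ι : Type*} [DecidableEq ι]

/-- The input `x` with all bits in the block `T` flipped, written `x^(T)` in the paper. -/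
def flipBlock (x : ι → Bool) (T : Finset ι) : ι → Bool :=
  fun k ↦ if k ∈ T then !x k else x k

lemma flipBlock_empty (x : ι → Bool) : flipBlock x ∅ = x := by
  funext k
  simp [flipBlock]

lemma flipBlock_symmDiff_singleton (x : ι → Bool) (T : Finset ι) (i : ι) :
    flipBlock x (T ∆ {i}) = Function.update (flipBlock x T) i (!flipBlock x T i) := by
  funext k
  rcases eq_or_ne k i with rfl | hki
  · by_cases hk : k ∈ T <;> simp [flipBlock, mem_symmDiff, hk]
  · simp [flipBlock, mem_symmDiff, hki]

/-- The function `f`, read around the input `x` and with values in `{1, -1}`: it is `1` at the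
blocks whose flipping preserves `f x`. -/
def flipSign (f : (ι → Bool) → Bool) (x : ι → Bool) (T : Finset ι) : ℝ :=
  if f (flipBlock x T) = f x then 1 else -1

lemma abs_flipSign (f : (ι → Bool) → Bool) (x : ι → Bool) (T : Finset ι) :
    |flipSign f x T| = 1 := by
  unfold flipSign
  split_ifs <;> simp

theorem card_le_pow_four_of_forall_flipBlock_ne {κ : Type*} [Fintype ι] [Fintype κ]
    {f : (ι → Bool) → Bool} {s : ℕ}
    (hs : ∀ x, #{i | f (Function.update x i (!x i)) ≠ f x} ≤ s)
    {x : ι → Bool} {B : κ → Finset ι} (hB : Pairwise (onFun Disjoint B))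
    (hflip : ∀ j, f (flipBlock x (B j)) ≠ f x) : Fintype.card κ ≤ s ^ 4 := by
  classical
  have hsens : ∀ T, #{i | flipSign f x (T ∆ {i}) ≠ flipSign f x T} ≤ s := by
    refine fun T ↦ (card_le_card ?_).trans (hs (flipBlock x T))
    refine monotone_filter_right _ fun i _ hi hfi ↦ hi ?_
    rw [flipSign, flipBlock_symmDiff_singleton, hfi, flipSign]
  have hdeg : HasDegreeLE (fun T ↦ flipSign f x (T.biUnion B)) (s ^ 2) :=
    (hasDegreeLE_sq_of_card_sensitive_le (abs_flipSign f x) hsens).comp_biUnion hB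
  calc Fintype.card κ ≤ (s ^ 2) ^ 2 :=
        hdeg.card_le_sq (fun T ↦ (abs_flipSign f x _).le) (by simp [flipSign, flipBlock_empty])
          fun j _ ↦ by simp [flipSign, hflip j]
    _ = s ^ 4 := by ring

lemma card_sensitive_le_sens {n : ℕ} (f : (Fin n → Bool) → Bool) (x : Fin n → Bool) :
    #{i | f (Function.update x i (!x i)) ≠ f x} ≤ sens f :=
  Finset.le_sup (f := fun x : Fin n → Bool ↦ #{i | f (Function.update x i (!x i)) ≠ f x})
    (mem_univ x)

end BlockFlip

end BlockSensitivity

theorem blockSens_le_two_mul_sens_pow_four_general {n : ℕ} (f : (Fin n → Bool) → Bool) :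
    blockSens f ≤ sens f ^ 4 := by
  refine csSup_le' ?_
  rintro t ⟨x, B, -, hdisj, hflip⟩
  simpa using BlockSensitivity.card_le_pow_four_of_forall_flipBlock_ne
    (BlockSensitivity.card_sensitive_le_sens f) (fun i j ↦ hdisj i j) hflip

/-- For every Boolean function `f`, `bs(f) ≤ 2·s(f)⁴`. -/
theorem blockSens_le_two_mul_sens_pow_four (n : ℕ) (f : (Fin n → Bool) → Bool) :
    blockSens f ≤ 2 * sens f ^ 4 :=
  (blockSens_le_two_mul_sens_pow_four_general f).trans (Nat.le_mul_of_pos_left _ two_pos)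
end

section
/- For every Boolean function f : {0,1}^n → {0,1}, deg(f) ≥ √(bs(f)/2), i.e. 2·deg(f)^2 ≥ bs(f). -/
/-!
Fix an input `x` and disjoint sensitive blocks `B i`, `i ∈ ι`. Substituting for each variable of `p`
the affine polynomial that flips `x` on the blocks selected by new variables gives
`P : MvPolynomial ι ℝ` of no larger degree, with values in `[0, 1]` on the cube `{0,1}^ι`.
If every block is selected independently with probability `s`, the mean of `P` is a univariate
polynomial `q` in `s` of degree at most `deg p`: it maps `[0, 1]` to `[0, 1]`, and
`q'(0) = ∑ i, (P(eᵢ) - P(0))` is `± |ι|` because flipping any single block changes `f x`.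
The endpoint case of Markov's inequality then bounds `|ι|`; it reads `|q'(0)| ≤ (deg q)²`, without
a factor `2`, because the range `[0, 1]` has half the length of the usual `[-1, 1]`.
-/

open Finset

section Markov

open Polynomial

theorem abs_derivative_eval_one_le_sq {d : ℕ} {q : ℝ[X]} (hdeg : q.natDegree ≤ d)
    (hbound : ∀ x ∈ Set.Icc (-1) 1, |q.eval x| ≤ 1) :
    |q.derivative.eval 1| ≤ (d : ℝ) ^ 2 := by
  have eval_one_le {r : ℝ[X]} (hr : r.natDegree ≤ d)
      (hr_bound : ∀ x ∈ Set.Icc (-1) 1, |r.eval x| ≤ 1) : r.derivative.eval 1 ≤ (d : ℝ) ^ 2 := by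
    simpa [Chebyshev.derivative_T_eval_one] using
      Chebyshev.eval_iterate_derivative_le_of_forall_abs_le_one (k := 1) le_rfl
        (degree_le_of_natDegree_le hr) hr_bound
  refine abs_le'.mpr ⟨eval_one_le hdeg hbound, ?_⟩
  simpa using eval_one_le (r := -q) (by simpa using hdeg) (by simpa using hbound)

theorem abs_derivative_eval_left_le_of_mapsTo_Icc {a b c d : ℝ} (hab : a < b) (hcd : c < d)
    {q : ℝ[X]} (hq : Set.MapsTo q.eval (Set.Icc a b) (Set.Icc c d)) :
    |q.derivative.eval a| ≤ (d - c) / (b - a) * (q.natDegree : ℝ) ^ 2 := by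
  have hba_pos : 0 < b - a := sub_pos.mpr hab
  have hdc_pos : 0 < d - c := sub_pos.mpr hcd
  -- `l` sends `1, -1` to `a, b`, and `r` is `q ∘ l` with `[c, d]` rescaled to `[-1, 1]`.
  let l : ℝ[X] := C a + C ((b - a) / 2) * (1 - X)
  let r : ℝ[X] := C (2 / (d - c)) * (q.comp l - C ((c + d) / 2))
  have hl : l.natDegree ≤ 1 := by unfold l; compute_degree
  have hr : r.natDegree ≤ q.natDegree :=
    calc r.natDegree ≤ (q.comp l).natDegree :=
          (natDegree_C_mul_le _ _).trans_eq natDegree_sub_C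
      _ ≤ q.natDegree * l.natDegree := natDegree_comp_le
      _ ≤ q.natDegree := mul_le_of_le_one_right' hl
  have hr_bound : ∀ x ∈ Set.Icc (-1) 1, |r.eval x| ≤ 1 := by
    rintro x ⟨hx_ge, hx_le⟩
    have hl_eval : l.eval x = a + (b - a) / 2 * (1 - x) := by simp [l]
    have hl_mem : l.eval x ∈ Set.Icc a b := by
      rw [hl_eval]
      constructor <;> nlinarith
    obtain ⟨hc, hd⟩ := hq hl_mem
    have hr_eval : r.eval x = 2 * (q.eval (l.eval x) - (c + d) / 2) / (d - c) := by
      simp only [r, eval_mul, eval_C, eval_sub, eval_comp]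
      ring
    rw [hr_eval, abs_le, le_div_iff₀ hdc_pos, div_le_one hdc_pos]
    constructor <;> linarith
  have hr_deriv : q.derivative.eval a = -((d - c) / (b - a)) * r.derivative.eval 1 := by
    have hl_one : l.eval 1 = a := by simp [l]
    have hl_deriv : l.derivative.eval 1 = -((b - a) / 2) := by simp [l]
    simp only [r, derivative_C_mul, derivative_sub, derivative_C, sub_zero, derivative_comp,
      eval_mul, eval_C, eval_comp, hl_one, hl_deriv]
    field_simp
  rw [hr_deriv, abs_mul, abs_neg, abs_of_pos (by positivity)]
  gcongr
  exact abs_derivative_eval_one_le_sq hr hr_bound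

end Markov

section BernoulliMean

open MvPolynomial

variable {ι R : Type*}

/-- The mean of `P` at the indicator of a random subset of `ι` that contains each element
independently with probability `X`. It is encoded by its closed form: the monomial `m` takes the
value `1` exactly when the subset contains `m.support`, an event of probability `X ^ #m.support`. -/
noncomputable def bernoulliMean [CommSemiring R] (P : MvPolynomial ι R) : Polynomial R :=
  ∑ m ∈ P.support, Polynomial.monomial #m.support (P.coeff m)

theorem natDegree_bernoulliMean_le [CommSemiring R] (P : MvPolynomial ι R) :
    (bernoulliMean P).natDegree ≤ P.totalDegree := by
  refine Polynomial.natDegree_sum_le_of_forall_le _ _ fun m hm => ?_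
  calc (Polynomial.monomial #m.support (P.coeff m)).natDegree
      ≤ #m.support := Polynomial.natDegree_monomial_le _
    _ ≤ ∑ i ∈ m.support, m i := by
        simpa using card_nsmul_le_sum m.support m 1 fun i hi =>
          Nat.one_le_iff_ne_zero.mpr (Finsupp.mem_support_iff.mp hi)
    _ ≤ P.totalDegree := le_totalDegree hm

theorem eval_indicator_eq_sum_coeff [DecidableEq ι] [CommSemiring R] (P : MvPolynomial ι R)
    (S : Finset ι) :
    eval ((S : Set ι).indicator 1) P = ∑ m ∈ P.support with m.support ⊆ S, P.coeff m := by
  rw [eval_eq, sum_filter]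
  refine sum_congr rfl fun m _ => ?_
  split_ifs with hmS
  · rw [Finset.prod_eq_one, mul_one]
    intro i hi
    simp [hmS hi]
  · obtain ⟨i, hi, hiS⟩ := not_subset.mp hmS
    rw [Finset.prod_eq_zero hi, mul_zero]
    simp [hiS, Finsupp.mem_support_iff.mp hi]

theorem sum_superset_pow_card_mul_one_sub_pow_card_compl [Fintype ι] [DecidableEq ι] [CommRing R]
    (s : R) (T : Finset ι) : ∑ S with T ⊆ S, s ^ #S * (1 - s) ^ #Sᶜ = s ^ #T := by
  calc ∑ S with T ⊆ S, s ^ #S * (1 - s) ^ #Sᶜ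
      = ∑ S, (∏ _i ∈ S, s) * ∏ i ∈ Sᶜ, (if i ∈ T then 0 else 1 - s) := by
        rw [sum_filter]
        refine sum_congr rfl fun S _ => ?_
        split_ifs with hTS
        · rw [prod_const, ← prod_const (1 - s)]
          congr 1
          refine prod_congr rfl fun i hi => ?_
          rw [if_neg fun hiT => mem_compl.mp hi (hTS hiT)]
        · obtain ⟨i, hiT, hiS⟩ := not_subset.mp hTS
          rw [prod_eq_zero (mem_compl.mpr hiS) (by rw [if_pos hiT]), mul_zero]
    _ = ∏ i, (s + if i ∈ T then 0 else 1 - s) := (Fintype.prod_add _ _).symm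
    _ = ∏ i, if i ∈ T then s else 1 := prod_congr rfl fun i _ => by split_ifs <;> ring
    _ = s ^ #T := by simp [prod_ite_mem]

theorem eval_bernoulliMean [Fintype ι] [DecidableEq ι] [CommRing R] (P : MvPolynomial ι R) (s : R) :
    (bernoulliMean P).eval s =
      ∑ S : Finset ι, s ^ #S * (1 - s) ^ #Sᶜ * eval ((S : Set ι).indicator 1) P := by
  simp_rw [eval_indicator_eq_sum_coeff, mul_sum, sum_filter]
  rw [sum_comm, bernoulliMean, Polynomial.eval_finsetSum]
  refine sum_congr rfl fun m _ => ?_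
  rw [Polynomial.eval_monomial, ← sum_superset_pow_card_mul_one_sub_pow_card_compl, mul_comm,
    sum_mul, sum_filter]

theorem eval_bernoulliMean_mem_of_convex [Finite ι] [Field R] [LinearOrder R]
    [IsStrictOrderedRing R] {P : MvPolynomial ι R} {K : Set R} (hK : Convex R K)
    (hP : ∀ S : Finset ι, eval ((S : Set ι).indicator 1) P ∈ K) {s : R}
    (hs : s ∈ Set.Icc 0 1) : (bernoulliMean P).eval s ∈ K := by
  classical
  have := Fintype.ofFinite ι
  rw [eval_bernoulliMean]
  refine hK.sum_mem (fun S _ => ?_) ?_ fun S _ => hP S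
  · exact mul_nonneg (pow_nonneg hs.1 _) (pow_nonneg (sub_nonneg.mpr hs.2) _)
  · simpa using sum_superset_pow_card_mul_one_sub_pow_card_compl s (∅ : Finset ι)

theorem eval_indicator_singleton_sub_eval_zero [DecidableEq ι] [CommRing R] (P : MvPolynomial ι R)
    (i : ι) :
    eval (({i} : Set ι).indicator 1) P - eval 0 P =
      ∑ m ∈ P.support with m.support = {i}, P.coeff m := by
  have h_singleton := eval_indicator_eq_sum_coeff P {i}
  have h_empty := eval_indicator_eq_sum_coeff P ∅
  rw [coe_singleton] at h_singleton
  rw [coe_empty, Set.indicator_empty'] at h_empty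
  rw [h_singleton, h_empty, sub_eq_iff_eq_add]
  simp_rw [subset_singleton_iff, subset_empty, or_comm (a := _ = ∅)]
  rw [filter_or, sum_union]
  exact disjoint_filter.mpr fun m _ h h' => singleton_ne_empty i (h.symm.trans h')

theorem derivative_bernoulliMean_eval_zero [Fintype ι] [CommRing R] (P : MvPolynomial ι R) :
    (bernoulliMean P).derivative.eval 0 =
      ∑ i, (eval (({i} : Set ι).indicator 1) P - eval 0 P) := by
  classical
  simp_rw [eval_indicator_singleton_sub_eval_zero, sum_filter]
  rw [sum_comm, ← Polynomial.coeff_zero_eq_eval_zero, Polynomial.coeff_derivative, bernoulliMean,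
    Polynomial.finsetSum_coeff]
  simp only [zero_add, Nat.cast_zero, mul_one, Polynomial.coeff_monomial]
  refine sum_congr rfl fun m _ => ?_
  split_ifs with hm
  · obtain ⟨a, ha⟩ := card_eq_one.mp hm
    simp [ha]
  · refine (sum_eq_zero fun i _ => if_neg fun hi => hm ?_).symm
    rw [hi, card_singleton]

theorem abs_sum_eval_indicator_singleton_sub_eval_zero_le [Fintype ι] {P : MvPolynomial ι ℝ}
    {c d : ℝ} (hcd : c < d)
    (hP : ∀ S : Finset ι, eval ((S : Set ι).indicator 1) P ∈ Set.Icc c d) :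
    |∑ i, (eval (({i} : Set ι).indicator 1) P - eval 0 P)| ≤
      (d - c) * (P.totalDegree : ℝ) ^ 2 := by
  have hmaps : Set.MapsTo (bernoulliMean P).eval (Set.Icc 0 1) (Set.Icc c d) :=
    fun s hs => eval_bernoulliMean_mem_of_convex (convex_Icc c d) hP hs
  calc |∑ i, (eval (({i} : Set ι).indicator 1) P - eval 0 P)|
      = |(bernoulliMean P).derivative.eval 0| := by rw [derivative_bernoulliMean_eval_zero]
    _ ≤ (d - c) * ((bernoulliMean P).natDegree : ℝ) ^ 2 := by
        simpa using abs_derivative_eval_left_le_of_mapsTo_Icc zero_lt_one hcd hmaps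
    _ ≤ (d - c) * (P.totalDegree : ℝ) ^ 2 := by
        refine mul_le_mul_of_nonneg_left ?_ (sub_nonneg.mpr hcd.le)
        gcongr
        exact natDegree_bernoulliMean_le P

end BernoulliMean

section Blocks

open MvPolynomial

theorem totalDegree_bind₁_le_mul {σ τ R : Type*} [CommSemiring R] {d : ℕ}
    {g : σ → MvPolynomial τ R} (hg : ∀ i, (g i).totalDegree ≤ d) (p : MvPolynomial σ R) :
    (bind₁ g p).totalDegree ≤ p.totalDegree * d := by
  rw [bind₁, aeval_def, eval₂_eq]
  refine totalDegree_finsetSum_le fun m hm => ?_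
  calc (C (p.coeff m) * ∏ i ∈ m.support, g i ^ m i).totalDegree
      ≤ (∏ i ∈ m.support, g i ^ m i).totalDegree := by
        grw [totalDegree_mul, totalDegree_C, zero_add]
    _ ≤ ∑ i ∈ m.support, (g i ^ m i).totalDegree := totalDegree_finsetProd _ _
    _ ≤ ∑ i ∈ m.support, m i * d := by
        gcongr with i
        grw [totalDegree_pow, hg i]
    _ = (∑ i ∈ m.support, m i) * d := (sum_mul _ _ _).symm
    _ ≤ p.totalDegree * d := by
        gcongr
        exact le_totalDegree hm

variable {ι κ : Type*} [DecidableEq κ]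

theorem bval_mem_Icc (b : Bool) : bval b ∈ Set.Icc 0 1 := by
  cases b <;> simp [bval]

theorem bval_not (b : Bool) : bval (!b) = 1 - bval b := by
  cases b <;> simp [bval]

theorem abs_one_sub_two_mul_bval (b : Bool) : |1 - 2 * bval b| = 1 := by
  cases b <;> norm_num [bval]

/-- The input `x ^ (A)`: the bits of `x` in `A` are flipped. -/
def flipOn (x : κ → Bool) (A : Finset κ) : κ → Bool :=
  fun k => if k ∈ A then !x k else x k

theorem flipOn_empty (x : κ → Bool) : flipOn x ∅ = x :=
  rfl

theorem bval_flipOn (x : κ → Bool) (A : Finset κ) (k : κ) :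
    bval (flipOn x A k) = bval (x k) + (1 - 2 * bval (x k)) * (A : Set κ).indicator 1 k := by
  by_cases hk : k ∈ A
  · simp only [flipOn, hk, if_true, bval_not, Set.indicator_of_mem, mem_coe, Pi.one_apply]
    ring
  · simp [flipOn, hk]

/-- The affine polynomials, one for each bit, that express `x` with some of the blocks `B i` flipped
in terms of the indicator of the set of flipped blocks. They do so only for disjoint blocks. -/
noncomputable def blockFlipPoly [Fintype ι] (x : κ → Bool) (B : ι → Finset κ) (k : κ) :
    MvPolynomial ι ℝ :=
  C (bval (x k)) + C (1 - 2 * bval (x k)) * ∑ i with k ∈ B i, X i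

theorem totalDegree_blockFlipPoly_le_one [Fintype ι] (x : κ → Bool) (B : ι → Finset κ) (k : κ) :
    (blockFlipPoly x B k).totalDegree ≤ 1 := by
  refine (totalDegree_add _ _).trans (max_le (by simp) ?_)
  grw [totalDegree_mul, totalDegree_C, zero_add]
  exact totalDegree_finsetSum_le fun i _ => (totalDegree_X i).le

theorem sum_indicator_eq_indicator_biUnion {R : Type*} [AddCommMonoidWithOne R] [Fintype ι]
    {B : ι → Finset κ}
    (hB : Pairwise (Function.onFun Disjoint B)) (S : Finset ι) (k : κ) :
    ∑ i with k ∈ B i, (S : Set ι).indicator (1 : ι → R) i =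
      (S.biUnion B : Set κ).indicator 1 k := by
  by_cases hk : k ∈ S.biUnion B
  · obtain ⟨i, hiS, hki⟩ := mem_biUnion.mp hk
    have hblocks : ({j | k ∈ B j} : Finset ι) = {i} := by
      ext j
      rw [mem_filter_univ, mem_singleton]
      refine ⟨fun hkj => by_contra fun hji => ?_, fun hji => hji ▸ hki⟩
      exact disjoint_left.mp (hB hji) hkj hki
    rw [hblocks, sum_singleton, Set.indicator_of_mem (mem_coe.mpr hiS),
      Set.indicator_of_mem (mem_coe.mpr hk)]
    rfl
  · rw [Set.indicator_of_notMem (mt mem_coe.mp hk)]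
    refine sum_eq_zero fun i hi => Set.indicator_of_notMem (fun hiS => hk ?_) _
    exact mem_biUnion.mpr ⟨i, mem_coe.mp hiS, (mem_filter_univ i).mp hi⟩

theorem eval_blockFlipPoly [Fintype ι] (x : κ → Bool) {B : ι → Finset κ}
    (hB : Pairwise (Function.onFun Disjoint B)) (S : Finset ι) (k : κ) :
    eval ((S : Set ι).indicator 1) (blockFlipPoly x B k) =
      bval (flipOn x (S.biUnion B) k) := by
  rw [bval_flipOn, ← sum_indicator_eq_indicator_biUnion hB]
  simp [blockFlipPoly]

variable {n : ℕ} {f : (Fin n → Bool) → Bool} {p : MvPolynomial (Fin n) ℝ}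

theorem Represents.eval_bind₁_blockFlipPoly [Fintype ι] (hrep : Represents p f) (x : Fin n → Bool)
    {B : ι → Finset (Fin n)} (hB : Pairwise (Function.onFun Disjoint B)) (S : Finset ι) :
    eval ((S : Set ι).indicator 1) (bind₁ (blockFlipPoly x B) p) =
      bval (f (flipOn x (S.biUnion B))) := by
  rw [← hrep]
  simp_rw [← eval_blockFlipPoly x hB]
  exact eval₂Hom_bind₁ _ _ _ _

theorem Represents.card_le_totalDegree_sq_of_sensitive_blocks [Fintype ι] (hrep : Represents p f)
    {x : Fin n → Bool} {B : ι → Finset (Fin n)} (hB : Pairwise (Function.onFun Disjoint B))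
    (hsens : ∀ i, f (flipOn x (B i)) ≠ f x) : Fintype.card ι ≤ p.totalDegree ^ 2 := by
  let P : MvPolynomial ι ℝ := bind₁ (blockFlipPoly x B) p
  have hP (S : Finset ι) : eval ((S : Set ι).indicator 1) P =
      bval (f (flipOn x (S.biUnion B))) := hrep.eval_bind₁_blockFlipPoly x hB S
  have hdeg : P.totalDegree ≤ p.totalDegree := by
    simpa using totalDegree_bind₁_le_mul (totalDegree_blockFlipPoly_le_one x B) p
  have hdiff (i : ι) : eval (({i} : Set ι).indicator 1) P - eval 0 P =
      1 - 2 * bval (f x) := by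
    have h_singleton : eval (({i} : Set ι).indicator 1) P = 1 - bval (f x) := by
      simpa [Bool.eq_not.mpr (hsens i), bval_not] using hP {i}
    have h_zero : eval 0 P = bval (f x) := by
      simpa only [coe_empty, Set.indicator_empty', biUnion_empty, flipOn_empty] using hP ∅
    rw [h_singleton, h_zero]
    ring
  have hcard : (Fintype.card ι : ℝ) ≤ (p.totalDegree : ℝ) ^ 2 :=
    calc (Fintype.card ι : ℝ)
        = |∑ i, (eval (({i} : Set ι).indicator 1) P - eval 0 P)| := by
          simp_rw [hdiff, sum_const, abs_nsmul, abs_one_sub_two_mul_bval, card_univ, nsmul_one]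
      _ ≤ (P.totalDegree : ℝ) ^ 2 := by
          simpa using abs_sum_eval_indicator_singleton_sub_eval_zero_le zero_lt_one
            fun S => hP S ▸ bval_mem_Icc _
      _ ≤ (p.totalDegree : ℝ) ^ 2 := by gcongr
  exact_mod_cast hcard

end Blocks

theorem blockSens_le_two_mul_degree_sq_general {n : ℕ} {f : (Fin n → Bool) → Bool}
    {p : MvPolynomial (Fin n) ℝ} (hrep : Represents p f) :
    blockSens f ≤ p.totalDegree ^ 2 := by
  refine csSup_le' ?_
  rintro t ⟨x, B, -, hdisj, hsens⟩
  simpa using hrep.card_le_totalDegree_sq_of_sensitive_blocks (fun i j hij => hdisj i j hij) hsens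

/-- Nisan–Szegedy: for every Boolean function `f`, `deg f ≥ √(bs(f)/2)`, i.e.
`2·(deg f)² ≥ bs(f)`, where `deg f` is the degree of the (unique) multilinear
real polynomial representing `f`. -/
theorem blockSens_le_two_mul_degree_sq (n : ℕ) (f : (Fin n → Bool) → Bool)
    (p : MvPolynomial (Fin n) ℝ) (hml : Multilinear p) (hrep : Represents p f) :
    blockSens f ≤ 2 * p.totalDegree ^ 2 :=
  (blockSens_le_two_mul_degree_sq_general hrep).trans (Nat.le_mul_of_pos_left _ two_pos)
end

section
/- For every Boolean function f : {0,1}^n → {0,1}, the approximate degree satisfies deg̃(f) ≥ √(bs(f)/6), i.e. 6·deg̃(f)^2 ≥ bs(f). -/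
/-!
Given disjoint blocks `B i` with `f (x^(B i)) ≠ f x`, substitute into `p` one variable per block
that decides whether the block is flipped. This gives a polynomial `q` on `{0,1}^t` of no larger
degree, and its expectation `Q(s)` over inputs with independent Bernoulli(`s`) coordinates is a
univariate polynomial: on the cube a monomial with support `S` is the indicator of
`S ⊆ T`, whose expectation is `s ^ |S|`, so `deg Q ≤ deg p`. As an average of values of `p`,
`Q` stays within `1/2 + ε` of `1/2` on `[0, 1]`. On the other hand `Q'(0) = ∑ i, (q(e_i) - q(0))`,
where all summands have the same sign and size at least `1 - 2ε`. Markov's inequality for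
`Q'` at the endpoint `0` now gives `t (1 - 2ε) ≤ (1 + 2ε) (deg p)²`; for `ε = 1/3` the resulting
constant is `5`.
-/

open Finset

section Markov

open Polynomial

theorem abs_eval_one_derivative_le_of_forall_abs_le {P : ℝ[X]} {M : ℝ}
    (hP : ∀ x ∈ Set.Icc (-1 : ℝ) 1, |P.eval x| ≤ M) :
    |(derivative P).eval 1| ≤ M * (P.natDegree : ℝ) ^ 2 := by
  have M_nonneg : 0 ≤ M := (abs_nonneg _).trans (hP 1 (by simp))
  rcases M_nonneg.eq_or_lt with rfl | M_pos
  · have P_eq_zero : P = 0 := eq_zero_of_infinite_isRoot P <|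
      (Set.Icc_infinite (by norm_num)).mono fun x hx ↦ abs_nonpos_iff.mp (hP x hx)
    simp [P_eq_zero]
  · have le_of_abs_eq_one (c : ℝ) (hc : |c| = 1) :
        c * (derivative P).eval 1 ≤ M * (P.natDegree : ℝ) ^ 2 := by
      have scaled_le_one (x : ℝ) (hx : x ∈ Set.Icc (-1 : ℝ) 1) :
          |(C (c / M) * P).eval x| ≤ 1 := by
        rw [eval_mul, eval_C, abs_mul, abs_div, hc, abs_of_pos M_pos, one_div_mul_eq_div]
        exact div_le_one_of_le₀ (hP x hx) M_nonneg
      have markov := Chebyshev.eval_iterate_derivative_le_of_forall_abs_le_one (k := 1) le_rfl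
        (degree_le_of_natDegree_le (natDegree_C_mul_le (c / M) P)) scaled_le_one
      simp only [Function.iterate_one, Chebyshev.derivative_T_eval_one, derivative_C_mul,
        eval_C_mul, Int.cast_natCast, div_mul_eq_mul_div] at markov
      exact (div_le_iff₀' M_pos).mp markov
    exact abs_le'.mpr ⟨by simpa using le_of_abs_eq_one 1 (by simp),
      by simpa using le_of_abs_eq_one (-1) (by simp)⟩

theorem abs_eval_zero_derivative_le_of_forall_abs_sub_le {Q : ℝ[X]} {a M : ℝ}
    (hQ : ∀ s ∈ Set.Icc (0 : ℝ) 1, |Q.eval s - a| ≤ M) :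
    |(derivative Q).eval 0| ≤ 2 * M * (Q.natDegree : ℝ) ^ 2 := by
  let P : ℝ[X] := (Q - C a).comp (C (1 / 2) - C (1 / 2) * X)
  have P_bound (x : ℝ) (hx : x ∈ Set.Icc (-1 : ℝ) 1) : |P.eval x| ≤ M := by
    simpa [P] using hQ (1 / 2 - 1 / 2 * x) ⟨by linarith [hx.2], by linarith [hx.1]⟩
  have P_natDegree : P.natDegree ≤ Q.natDegree := by
    have affine_natDegree : (C (1 / 2 : ℝ) - C (1 / 2) * X).natDegree ≤ 1 := by compute_degree
    calc P.natDegree ≤ (Q - C a).natDegree * (C (1 / 2 : ℝ) - C (1 / 2) * X).natDegree :=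
          natDegree_comp_le
      _ ≤ Q.natDegree * 1 := by rw [natDegree_sub_C]; gcongr
      _ = Q.natDegree := mul_one _
  have P_derivative : (derivative P).eval 1 = -(1 / 2) * (derivative Q).eval 0 := by
    simp [P, derivative_comp]
  have M_nonneg : 0 ≤ M := (abs_nonneg _).trans (P_bound 1 (by simp))
  calc |(derivative Q).eval 0| = 2 * |(derivative P).eval 1| := by
        rw [P_derivative, abs_mul, abs_neg, abs_of_pos (one_half_pos (α := ℝ))]; ring
    _ ≤ 2 * (M * (P.natDegree : ℝ) ^ 2) := by
        gcongr
        exact abs_eval_one_derivative_le_of_forall_abs_le P_bound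
    _ ≤ 2 * (M * (Q.natDegree : ℝ) ^ 2) := by gcongr
    _ = 2 * M * (Q.natDegree : ℝ) ^ 2 := by ring

end Markov

section BernoulliExpectation

open Polynomial

variable {ι R : Type*} [Fintype ι] [DecidableEq ι] [CommRing R]

/-- The expectation of `g T`, where the random subset `T` contains each element of `ι`
independently with probability `X`, as a polynomial in `X` depending linearly on `g`. -/
noncomputable def bernoulliExpectation : (Finset ι → R) →ₗ[R] R[X] :=
  Fintype.linearCombination R fun T : Finset ι ↦ X ^ #T * (1 - X) ^ #Tᶜ

theorem eval_bernoulliExpectation (g : Finset ι → R) (s : R) :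
    (bernoulliExpectation g).eval s = ∑ T, g T * (s ^ #T * (1 - s) ^ #Tᶜ) := by
  simp [bernoulliExpectation, Fintype.linearCombination_apply, eval_finsetSum]

theorem sum_pow_card_mul_one_sub_pow_card_compl (s : R) :
    ∑ T : Finset ι, s ^ #T * (1 - s) ^ #Tᶜ = 1 := by
  simpa [card_compl] using Fintype.sum_pow_mul_eq_add_pow ι s (1 - s)

theorem bernoulliExpectation_superset (S : Finset ι) :
    bernoulliExpectation (fun T ↦ if S ⊆ T then (1 : R) else 0) = X ^ #S := by
  have prod_compl (T : Finset ι) :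
      ∏ i ∈ Tᶜ, (if i ∈ S then 0 else 1 - X : R[X]) = if S ⊆ T then (1 - X) ^ #Tᶜ else 0 := by
    split_ifs with hST
    · exact prod_eq_pow_card fun i hi ↦ if_neg fun hiS ↦ mem_compl.mp hi (hST hiS)
    · obtain ⟨i, hiS, hiT⟩ := not_subset.mp hST
      exact prod_eq_zero (mem_compl.mpr hiT) (if_pos hiS)
  calc bernoulliExpectation (fun T ↦ if S ⊆ T then (1 : R) else 0)
      = ∑ T, (∏ _ ∈ T, X) * ∏ i ∈ Tᶜ, (if i ∈ S then 0 else 1 - X : R[X]) := by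
        simp [bernoulliExpectation, Fintype.linearCombination_apply, prod_compl]
    _ = ∏ i, (X + if i ∈ S then 0 else 1 - X) := (Fintype.prod_add _ _).symm
    _ = ∏ i, if i ∈ S then X else 1 := by
        refine prod_congr rfl fun i _ ↦ ?_
        split_ifs <;> ring
    _ = X ^ #S := by simp

theorem eval_zero_derivative_X_pow_mul_one_sub_X_pow (k m : ℕ) :
    (derivative (X ^ k * (1 - X) ^ m : R[X])).eval 0 =
      (if k = 1 then 1 else 0) - if k = 0 then (m : R) else 0 := by
  rcases k with _ | _ | k <;> simp [derivative_pow]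

theorem eval_zero_derivative_bernoulliExpectation (g : Finset ι → R) :
    (derivative (bernoulliExpectation g)).eval 0 = ∑ i, (g {i} - g ∅) := by
  have sum_singletons : ∑ T with #T = 1, g T = ∑ i, g {i} := by
    rw [← powerset_univ, ← powersetCard_eq_filter, powersetCard_one, sum_map]
    rfl
  calc (derivative (bernoulliExpectation g)).eval 0
      = ∑ T, (if #T = 1 then g T else 0) - ∑ T, if T = ∅ then g T * (#Tᶜ : R) else 0 := by
        simp only [bernoulliExpectation, Fintype.linearCombination_apply, derivative_sum,
          derivative_smul, eval_finsetSum, eval_smul, smul_eq_mul, mul_sub, sum_sub_distrib,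
          eval_zero_derivative_X_pow_mul_one_sub_X_pow, mul_ite, mul_one, mul_zero, card_eq_zero]
    _ = ∑ i, (g {i} - g ∅) := by
        rw [← sum_filter, sum_singletons]
        simp [sum_sub_distrib, mul_comm]

theorem abs_eval_bernoulliExpectation_sub_le {g : Finset ι → ℝ} {a M : ℝ}
    (hg : ∀ T, |g T - a| ≤ M) {s : ℝ} (hs : s ∈ Set.Icc (0 : ℝ) 1) :
    |(bernoulliExpectation g).eval s - a| ≤ M := by
  have one_sub_nonneg : 0 ≤ 1 - s := sub_nonneg.mpr hs.2
  have weight_nonneg (T : Finset ι) : 0 ≤ s ^ #T * (1 - s) ^ #Tᶜ :=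
    mul_nonneg (pow_nonneg hs.1 _) (pow_nonneg one_sub_nonneg _)
  calc |(bernoulliExpectation g).eval s - a|
      = |∑ T, (g T - a) * (s ^ #T * (1 - s) ^ #Tᶜ)| := by
        simp only [eval_bernoulliExpectation, sub_mul, sum_sub_distrib, ← mul_sum,
          sum_pow_card_mul_one_sub_pow_card_compl, mul_one]
    _ ≤ ∑ T, |(g T - a) * (s ^ #T * (1 - s) ^ #Tᶜ)| := abs_sum_le_sum_abs _ _
    _ ≤ ∑ T : Finset ι, M * (s ^ #T * (1 - s) ^ #Tᶜ) := by
        refine sum_le_sum fun T _ ↦ ?_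
        rw [abs_mul, abs_of_nonneg (weight_nonneg T)]
        exact mul_le_mul_of_nonneg_right (hg T) (weight_nonneg T)
    _ = M := by rw [← mul_sum, sum_pow_card_mul_one_sub_pow_card_compl, mul_one]

end BernoulliExpectation

section Cube

variable {ι R : Type*}

theorem eval_indicator_eq_sum [DecidableEq ι] [CommSemiring R] (p : MvPolynomial ι R)
    (T : Finset ι) :
    p.eval ((T : Set ι).indicator 1) =
      ∑ m ∈ p.support, p.coeff m * if m.support ⊆ T then 1 else 0 := by
  rw [MvPolynomial.eval_eq]
  refine sum_congr rfl fun m _ ↦ congrArg _ ?_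
  split_ifs with hmT
  · exact prod_eq_one fun i hi ↦ by simp [hmT hi]
  · obtain ⟨i, him, hiT⟩ := not_subset.mp hmT
    exact prod_eq_zero him (by simp [hiT, Finsupp.mem_support_iff.mp him])

variable [Fintype ι]

theorem natDegree_bernoulliExpectation_eval_indicator_le [DecidableEq ι] [CommRing R]
    (p : MvPolynomial ι R) :
    (bernoulliExpectation fun T : Finset ι ↦ p.eval ((T : Set ι).indicator 1)).natDegree ≤
      p.totalDegree := by
  have expectation_eq : bernoulliExpectation (fun T : Finset ι ↦ p.eval ((T : Set ι).indicator 1)) =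
      ∑ m ∈ p.support, p.coeff m • (Polynomial.X : Polynomial R) ^ #m.support := by
    simp_rw [← bernoulliExpectation_superset, ← map_smul, ← map_sum]
    congr 1
    ext T
    simp [eval_indicator_eq_sum]
  rw [expectation_eq]
  refine Polynomial.natDegree_sum_le_of_forall_le _ _ fun m hm ↦ ?_
  calc (p.coeff m • (Polynomial.X : Polynomial R) ^ #m.support).natDegree
      ≤ #m.support := (Polynomial.natDegree_smul_le _ _).trans (Polynomial.natDegree_X_pow_le _)
    _ ≤ m.sum fun _ e ↦ e := by
        simpa [Finsupp.sum] using card_nsmul_le_sum m.support m 1 fun i hi ↦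
          Nat.one_le_iff_ne_zero.mpr (Finsupp.mem_support_iff.mp hi)
    _ ≤ p.totalDegree := MvPolynomial.le_totalDegree hm

theorem abs_sum_eval_indicator_singleton_sub_le {p : MvPolynomial ι ℝ} {a M : ℝ}
    (hp : ∀ T : Finset ι, |p.eval ((T : Set ι).indicator 1) - a| ≤ M) :
    |∑ i, (p.eval (({i} : Set ι).indicator 1) - p.eval 0)| ≤ 2 * M * (p.totalDegree : ℝ) ^ 2 := by
  classical
  set g : Finset ι → ℝ := fun T ↦ p.eval ((T : Set ι).indicator 1) with hg
  have M_nonneg : 0 ≤ M := (abs_nonneg _).trans (hp ∅)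
  calc |∑ i, (p.eval (({i} : Set ι).indicator 1) - p.eval 0)|
      = |(Polynomial.derivative (bernoulliExpectation g)).eval 0| := by
        simp [eval_zero_derivative_bernoulliExpectation, hg]
    _ ≤ 2 * M * ((bernoulliExpectation g).natDegree : ℝ) ^ 2 :=
        abs_eval_zero_derivative_le_of_forall_abs_sub_le fun _ hs ↦
          abs_eval_bernoulliExpectation_sub_le hp hs
    _ ≤ 2 * M * (p.totalDegree : ℝ) ^ 2 := by
        gcongr
        exact natDegree_bernoulliExpectation_eval_indicator_le p

end Cube

section BlockFlip

open MvPolynomial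

theorem totalDegree_bind₁_le {σ τ R : Type*} [CommSemiring R] {φ : σ → MvPolynomial τ R} {k : ℕ}
    (hφ : ∀ i, (φ i).totalDegree ≤ k) (p : MvPolynomial σ R) :
    (bind₁ φ p).totalDegree ≤ p.totalDegree * k := by
  rw [bind₁, aeval_def, eval₂_eq]
  refine totalDegree_finsetSum_le fun m hm ↦ ?_
  calc (C (p.coeff m) * ∏ i ∈ m.support, φ i ^ m i).totalDegree
      ≤ (∏ i ∈ m.support, φ i ^ m i).totalDegree := by
        simpa using totalDegree_mul (C (p.coeff m)) _
    _ ≤ ∑ i ∈ m.support, (φ i ^ m i).totalDegree := totalDegree_finsetProd _ _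
    _ ≤ ∑ i ∈ m.support, m i * k := sum_le_sum fun i _ ↦
        (totalDegree_pow _ _).trans (Nat.mul_le_mul_left _ (hφ i))
    _ = (m.sum fun _ e ↦ e) * k := (sum_mul _ _ _).symm
    _ ≤ p.totalDegree * k := Nat.mul_le_mul_right k (le_totalDegree hm)

variable {κ ι : Type*} [DecidableEq κ]

/-- The input `x^(S)` obtained from `x` by flipping all bits in `S`. -/
def flipBlock (x : κ → Bool) (S : Finset κ) : κ → Bool :=
  fun k ↦ if k ∈ S then !x k else x k

theorem flipBlock_empty (x : κ → Bool) : flipBlock x ∅ = x := by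
  funext k
  simp [flipBlock]

theorem bval_flipBlock (x : κ → Bool) (S : Finset κ) (k : κ) :
    bval (flipBlock x S k) = bval (x k) + (1 - 2 * bval (x k)) * if k ∈ S then 1 else 0 := by
  by_cases hk : k ∈ S <;> cases hx : x k <;> norm_num [flipBlock, bval, hk, hx]

variable [Fintype ι]

/-- The polynomial in one variable per block obtained from `p` by letting the variable `i` decide
whether the block `B i` of the input `x` is flipped. The bit `b` becomes `b + (1 - 2b) y`, which is
`b` at `y = 0` and its negation at `y = 1`; for disjoint blocks the sum has at most one term. -/
noncomputable def blockRestriction (x : κ → Bool) (B : ι → Finset κ) (p : MvPolynomial κ ℝ) :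
    MvPolynomial ι ℝ :=
  bind₁ (fun k ↦ C (bval (x k)) + C (1 - 2 * bval (x k)) * ∑ i with k ∈ B i, X i) p

theorem totalDegree_blockRestriction_le (x : κ → Bool) (B : ι → Finset κ) (p : MvPolynomial κ ℝ) :
    (blockRestriction x B p).totalDegree ≤ p.totalDegree := by
  refine (totalDegree_bind₁_le (k := 1) (fun k ↦ ?_) p).trans_eq (mul_one _)
  have sum_totalDegree : (∑ i with k ∈ B i, X i : MvPolynomial ι ℝ).totalDegree ≤ 1 :=
    totalDegree_finsetSum_le fun i _ ↦ (totalDegree_X i).le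
  refine (totalDegree_add _ _).trans (max_le (by simp) ?_)
  refine (totalDegree_mul _ _).trans ?_
  rwa [totalDegree_C, zero_add]

theorem eval_blockRestriction_indicator (x : κ → Bool) {B : ι → Finset κ}
    (hB : Pairwise (Function.onFun Disjoint B)) (p : MvPolynomial κ ℝ) (T : Finset ι) :
    (blockRestriction x B p).eval ((T : Set ι).indicator 1) =
      p.eval fun k ↦ bval (flipBlock x (T.biUnion B) k) := by
  classical
  have sum_indicator (k : κ) : ∑ i with k ∈ B i, (T : Set ι).indicator (1 : ι → ℝ) i =
      if k ∈ T.biUnion B then 1 else 0 :=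
    calc ∑ i with k ∈ B i, (T : Set ι).indicator (1 : ι → ℝ) i
        = ∑ i ∈ T, if k ∈ B i then 1 else 0 := by
          simp [Set.indicator_apply, filter_inter]
      _ = ∑ i ∈ T, ∑ j ∈ B i, if k = j then 1 else 0 := by simp only [sum_ite_eq]
      _ = ∑ j ∈ T.biUnion B, if k = j then 1 else 0 := (sum_biUnion (hB.set_pairwise _)).symm
      _ = if k ∈ T.biUnion B then 1 else 0 := sum_ite_eq _ _ _
  have eval_substitution (k : κ) :
      (C (bval (x k)) + C (1 - 2 * bval (x k)) *
        ∑ i with k ∈ B i, X i).eval ((T : Set ι).indicator 1) =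
      bval (flipBlock x (T.biUnion B) k) := by
    simp only [map_add, map_mul, map_sum, eval_C, eval_X, sum_indicator, bval_flipBlock]
  rw [blockRestriction, ← coe_aeval_eq_eval, RingHom.coe_coe, aeval_bind₁]
  simp_rw [aeval_eq_eval, eval_substitution]

end BlockFlip

theorem abs_sub_half_le_of_abs_sub_bval_le {u ε : ℝ} {b : Bool} (hu : |u - bval b| ≤ ε) :
    |u - 1 / 2| ≤ 1 / 2 + ε :=
  calc |u - 1 / 2| ≤ |u - bval b| + |bval b - 1 / 2| := abs_sub_le _ _ _
    _ ≤ 1 / 2 + ε := by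
      have bval_sub_half : |bval b - 1 / 2| = 1 / 2 := by cases b <;> norm_num [bval, abs]
      linarith

theorem one_sub_two_mul_le_of_abs_sub_bval_le {u v ε : ℝ} {b c : Bool} (hcb : c ≠ b)
    (hu : |u - bval b| ≤ ε) (hv : |v - bval c| ≤ ε) :
    1 - 2 * ε ≤ (1 - 2 * bval b) * (v - u) := by
  rw [abs_le] at hu hv
  cases b <;> cases c <;> simp_all [bval] <;> linarith

theorem card_mul_le_totalDegree_sq_of_flipBlock_ne {κ ι : Type*} [DecidableEq κ] [Fintype ι]
    {f : (κ → Bool) → Bool} {p : MvPolynomial κ ℝ} {ε : ℝ}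
    (hp : ∀ x, |p.eval (fun k ↦ bval (x k)) - bval (f x)| ≤ ε) {x : κ → Bool}
    {B : ι → Finset κ} (hB : Pairwise (Function.onFun Disjoint B))
    (hf : ∀ i, f (flipBlock x (B i)) ≠ f x) :
    Fintype.card ι * (1 - 2 * ε) ≤ (1 + 2 * ε) * (p.totalDegree : ℝ) ^ 2 := by
  classical
  set q := blockRestriction x B p
  have q_eval (T : Finset ι) : |q.eval ((T : Set ι).indicator 1) -
      bval (f (flipBlock x (T.biUnion B)))| ≤ ε := by
    rw [eval_blockRestriction_indicator x hB]
    exact hp _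
  have jump (i : ι) : 1 - 2 * ε ≤
      (1 - 2 * bval (f x)) * (q.eval (({i} : Set ι).indicator 1) - q.eval 0) :=
    one_sub_two_mul_le_of_abs_sub_bval_le (hf i)
      (by simpa [flipBlock_empty] using q_eval ∅) (by simpa using q_eval {i})
  have abs_sign : |1 - 2 * bval (f x)| = 1 := by cases f x <;> norm_num [bval]
  have ε_nonneg : 0 ≤ ε := (abs_nonneg _).trans (hp x)
  calc Fintype.card ι * (1 - 2 * ε)
      ≤ ∑ i, (1 - 2 * bval (f x)) * (q.eval (({i} : Set ι).indicator 1) - q.eval 0) := by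
        simpa using card_nsmul_le_sum univ _ _ fun i _ ↦ jump i
    _ ≤ |∑ i, (q.eval (({i} : Set ι).indicator 1) - q.eval 0)| := by
        rw [← mul_sum]
        exact (le_abs_self _).trans_eq (by rw [abs_mul, abs_sign, one_mul])
    _ ≤ 2 * (1 / 2 + ε) * (q.totalDegree : ℝ) ^ 2 :=
        abs_sum_eval_indicator_singleton_sub_le fun T ↦
          abs_sub_half_le_of_abs_sub_bval_le (q_eval T)
    _ ≤ 2 * (1 / 2 + ε) * (p.totalDegree : ℝ) ^ 2 := by
        gcongr
        exact totalDegree_blockRestriction_le x B p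
    _ = (1 + 2 * ε) * (p.totalDegree : ℝ) ^ 2 := by ring

theorem blockSens_le_six_mul_approx_degree_sq_general {n : ℕ} {f : (Fin n → Bool) → Bool}
    {p : MvPolynomial (Fin n) ℝ} {ε : ℝ} (hε : ε < 1 / 2)
    (hp : ∀ x, |p.eval (fun k ↦ bval (x k)) - bval (f x)| ≤ ε) :
    (blockSens f : ℝ) ≤ (1 + 2 * ε) / (1 - 2 * ε) * (p.totalDegree : ℝ) ^ 2 := by
  have ε_nonneg : 0 ≤ ε := (abs_nonneg _).trans (hp fun _ ↦ false)
  have gap_pos : 0 < 1 - 2 * ε := by linarith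
  refine (Nat.le_floor_iff (by positivity)).mp (csSup_le' ?_)
  rintro t ⟨x, B, -, hB, hf⟩
  refine Nat.le_floor ?_
  rw [div_mul_eq_mul_div, le_div_iff₀ gap_pos]
  simpa using card_mul_le_totalDegree_sq_of_flipBlock_ne hp hB hf

/-- Nisan–Szegedy: for every Boolean function `f`, the approximate degree satisfies
`deg̃ f ≥ √(bs(f)/6)`, i.e. `6·(deg̃ f)² ≥ bs(f)`.  Since `deg̃ f` is the minimum
degree over all polynomials approximating `f`, this is equivalent to:
every polynomial `p` approximating `f` satisfies `6·(deg p)² ≥ bs(f)`. -/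
theorem blockSens_le_six_mul_approx_degree_sq (n : ℕ) (f : (Fin n → Bool) → Bool)
    (p : MvPolynomial (Fin n) ℝ) (happrox : Approximates p f) :
    blockSens f ≤ 6 * p.totalDegree ^ 2 := by
  have le_five_mul : (blockSens f : ℝ) ≤ 5 * (p.totalDegree : ℝ) ^ 2 := by
    convert blockSens_le_six_mul_approx_degree_sq_general (by norm_num) fun x ↦ (happrox x).le
    norm_num
  exact_mod_cast le_five_mul.trans (by gcongr; norm_num : _ ≤ 6 * (p.totalDegree : ℝ) ^ 2)
end

section
/- For every integer n ≥ 1 there exists an induced subgraph G of the n-dimensional hypercube graph Q_n on exactly 2^(n-1) + 1 vertices whose maximum degree satisfies Δ(G) ≤ ⌈√n⌉ (in particular Δ(G) < √n + 1). -/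
/-!
Gotsman and Linial: let `A ⊆ {0,1}^n` and let `E` be the set of points of even weight. Along an edge
of `Q_n` membership in `E` always changes, so an edge lies inside `E ∆ A` only if membership in `A`
changes along it too: the degrees in `E ∆ A` are bounded by the sensitivity of `A`. Moreover
`|E ∆ A| = 2^(n-1) - ∑ x ∈ A, (-1)^|x|`, so if the signed sum is `±1`, then `E ∆ A` or `E ∆ Aᶜ` has
`2^(n-1) + 1` points.

Following Chung, Füredi, Graham and Seymour, split the coordinates into `⌈√n⌉` blocks of at most
`⌈√n⌉` elements (the residue classes modulo `⌈√n⌉`) and let `A` consist of the points having a one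
in every block. Its signed sum is `±1` by inclusion–exclusion. A point of `A` is sensitive to at
most one coordinate per block, and a point outside `A` only to the coordinates of one block.
-/

open Finset
open scoped symmDiff

section Flip

variable {ι : Type*} [DecidableEq ι]

/-- The neighbour of `x` in the hypercube along the direction `i`. -/
def flipAt (x : ι → Bool) (i : ι) : ι → Bool := Function.update x i (!x i)

@[simp]
lemma flipAt_self (x : ι → Bool) (i : ι) : flipAt x i i = !x i := by simp [flipAt]

lemma flipAt_of_ne (x : ι → Bool) {i j : ι} (h : j ≠ i) : flipAt x i j = x j := by simp [flipAt, h]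

@[simp]
lemma flipAt_flipAt (x : ι → Bool) (i : ι) : flipAt (flipAt x i) i = x := by simp [flipAt]

lemma flipAt_ne_self (x : ι → Bool) (i : ι) : flipAt x i ≠ x := fun h => by
  simpa using congrFun h i

end Flip

section Parity

variable {ι : Type*} [Fintype ι]

/-- The character `(-1)^|x|` of the hypercube, where `|x|` is the number of ones of `x`. -/
def paritySign (x : ι → Bool) : ℤ := ∏ i, if x i then -1 else 1

lemma paritySign_eq_one_or_neg_one (x : ι → Bool) : paritySign x = 1 ∨ paritySign x = -1 := by
  rw [paritySign, ← Int.isUnit_iff, IsUnit.prod_univ_iff]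
  intro i
  split <;> simp

variable [DecidableEq ι]

lemma paritySign_flipAt (x : ι → Bool) (i : ι) : paritySign (flipAt x i) = -paritySign x := by
  have h_off : ∏ j ∈ univ.erase i, (if flipAt x i j then (-1 : ℤ) else 1) =
      ∏ j ∈ univ.erase i, if x j then -1 else 1 :=
    prod_congr rfl fun j hj => by rw [flipAt_of_ne x (ne_of_mem_erase hj)]
  simp only [paritySign, ← mul_prod_erase univ _ (mem_univ i), h_off, flipAt_self]
  cases x i <;> simp

lemma sum_paritySign_eq_zero_of_flipAt_mem {B : Finset (ι → Bool)} {i : ι}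
    (hB : ∀ x ∈ B, flipAt x i ∈ B) : ∑ x ∈ B, paritySign x = 0 :=
  sum_involution (fun x _ => flipAt x i)
    (fun x _ => by rw [paritySign_flipAt, add_neg_cancel])
    (fun x _ _ => flipAt_ne_self x i) hB (fun x _ => flipAt_flipAt x i)

lemma sum_paritySign_univ [Nonempty ι] : ∑ x : ι → Bool, paritySign x = 0 :=
  sum_paritySign_eq_zero_of_flipAt_mem (i := Classical.arbitrary ι) fun _ _ => mem_univ _

variable (ι) in
/-- The points of the hypercube with an even number of ones. -/
def evenPoints : Finset (ι → Bool) := {x | paritySign x = 1}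

lemma mem_evenPoints {x : ι → Bool} : x ∈ evenPoints ι ↔ paritySign x = 1 := by simp [evenPoints]

lemma flipAt_mem_evenPoints {x : ι → Bool} {i : ι} :
    flipAt x i ∈ evenPoints ι ↔ x ∉ evenPoints ι := by
  rw [mem_evenPoints, mem_evenPoints, paritySign_flipAt]
  rcases paritySign_eq_one_or_neg_one x with h | h <;> simp [h]

lemma card_evenPoints_symmDiff [Nonempty ι] (A : Finset (ι → Bool)) :
    (#(evenPoints ι ∆ A) : ℤ) = 2 ^ (Fintype.card ι - 1) - ∑ x ∈ A, paritySign x := by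
  have h_indicator (x : ι → Bool) : 2 * (if x ∈ evenPoints ι ∆ A then 1 else 0 : ℤ) =
      1 + paritySign x - 2 * if x ∈ A then paritySign x else 0 := by
    by_cases hx : x ∈ A <;> rcases paritySign_eq_one_or_neg_one x with h | h <;>
      simp [mem_symmDiff, mem_evenPoints, hx, h]
  have h_double : 2 * (#(evenPoints ι ∆ A) : ℤ) =
      2 ^ Fintype.card ι - 2 * ∑ x ∈ A, paritySign x := by
    calc 2 * (#(evenPoints ι ∆ A) : ℤ)
        = ∑ x : ι → Bool, 2 * (if x ∈ evenPoints ι ∆ A then 1 else 0 : ℤ) := by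
          rw [← mul_sum, sum_boole, filter_univ_mem]
      _ = 2 ^ Fintype.card ι - 2 * ∑ x ∈ A, paritySign x := by
          simp_rw [h_indicator, sum_sub_distrib, sum_add_distrib, ← mul_sum, sum_paritySign_univ]
          simp
  have h_pow := mul_pow_sub_one (Fintype.card_ne_zero (α := ι)) (2 : ℤ)
  linarith

/-- The coordinates to which membership of `x` in `A` is sensitive; their number is the local
sensitivity at `x` of the Boolean function with truth set `A`. -/
def sensitiveCoords (A : Finset (ι → Bool)) (x : ι → Bool) : Finset ι :=
  {i | ¬(flipAt x i ∈ A ↔ x ∈ A)}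

lemma mem_sensitiveCoords {A : Finset (ι → Bool)} {x : ι → Bool} {i : ι} :
    i ∈ sensitiveCoords A x ↔ ¬(flipAt x i ∈ A ↔ x ∈ A) := by simp [sensitiveCoords]

lemma sensitiveCoords_compl (A : Finset (ι → Bool)) (x : ι → Bool) :
    sensitiveCoords Aᶜ x = sensitiveCoords A x := by
  simp only [sensitiveCoords, mem_compl, not_iff_not]

lemma mem_sensitiveCoords_of_mem_evenPoints_symmDiff {A : Finset (ι → Bool)} {x : ι → Bool} {i : ι}
    (hx : x ∈ evenPoints ι ∆ A) (hxi : flipAt x i ∈ evenPoints ι ∆ A) :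
    i ∈ sensitiveCoords A x := by
  rw [mem_symmDiff] at hx hxi
  rw [flipAt_mem_evenPoints] at hxi
  rw [mem_sensitiveCoords]
  tauto

end Parity

section BlockHitting

variable {ι κ : Type*} [Fintype ι] [DecidableEq ι] [DecidableEq κ]

/-- The points of the hypercube that vanish on the block `k` of the partition of the coordinates
into the fibres of `f`. -/
def blockVanishing (f : ι → κ) (k : κ) : Finset (ι → Bool) :=
  {x | ∀ i, f i = k → x i = false}

lemma mem_blockVanishing {f : ι → κ} {k : κ} {x : ι → Bool} :
    x ∈ blockVanishing f k ↔ ∀ i, f i = k → x i = false := by simp [blockVanishing]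

variable [Fintype κ]

/-- The points of the hypercube with a one in every block of the partition of the coordinates into
the fibres of `f`. As a Boolean function this is an AND of ORs over disjoint sets of variables. -/
def blockHitting (f : ι → κ) : Finset (ι → Bool) := {x | ∀ k, ∃ i, f i = k ∧ x i = true}

lemma mem_blockHitting {f : ι → κ} {x : ι → Bool} :
    x ∈ blockHitting f ↔ ∀ k, ∃ i, f i = k ∧ x i = true := by simp [blockHitting]

lemma blockHitting_eq_inf_compl (f : ι → κ) :
    blockHitting f = univ.inf fun k => (blockVanishing f k)ᶜ := by
  ext x
  simp [mem_blockHitting, mem_blockVanishing, mem_inf]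

lemma sum_paritySign_inf_blockVanishing {f : ι → κ} (hf : f.Surjective) (t : Finset κ) :
    ∑ x ∈ t.inf (blockVanishing f), paritySign x = if t = univ then 1 else 0 := by
  split_ifs with ht
  · have h_zero : t.inf (blockVanishing f) = {fun _ => false} := by
      ext x
      simp only [ht, mem_inf, mem_univ, mem_blockVanishing, mem_singleton, funext_iff]
      exact ⟨fun h i => h (f i) trivial i rfl, fun h _ _ i _ => h i⟩
    simp [h_zero, paritySign]
  · obtain ⟨k, hk⟩ : ∃ k, k ∉ t := by simpa [eq_univ_iff_forall] using ht
    obtain ⟨i, rfl⟩ := hf k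
    refine sum_paritySign_eq_zero_of_flipAt_mem (i := i) fun x hx => ?_
    simp only [mem_inf, mem_blockVanishing] at hx ⊢
    rintro l hl j rfl
    rw [flipAt_of_ne x (by rintro rfl; exact hk hl)]
    exact hx _ hl j rfl

lemma sum_paritySign_blockHitting {f : ι → κ} (hf : f.Surjective) :
    ∑ x ∈ blockHitting f, paritySign x = (-1) ^ Fintype.card κ := by
  rw [blockHitting_eq_inf_compl, inclusion_exclusion_sum_inf_compl]
  simp [sum_paritySign_inf_blockVanishing hf]

lemma injOn_sensitiveCoords_blockHitting {f : ι → κ} {x : ι → Bool} (hx : x ∈ blockHitting f) :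
    Set.InjOn f (sensitiveCoords (blockHitting f) x) := by
  have h_unique {i j : ι} (hi : i ∈ sensitiveCoords (blockHitting f) x) (hij : f j = f i)
      (hj : x j = true) : j = i := by
    by_contra hne
    refine mem_sensitiveCoords.1 hi (iff_of_true (mem_blockHitting.2 fun k => ?_) hx)
    obtain ⟨l, rfl, hl⟩ := mem_blockHitting.1 hx k
    rcases eq_or_ne l i with rfl | hli
    · exact ⟨j, hij, by rwa [flipAt_of_ne x hne]⟩
    · exact ⟨l, rfl, by rwa [flipAt_of_ne x hli]⟩
  intro i hi j hj hij
  obtain ⟨l, hli, hl⟩ := mem_blockHitting.1 hx (f i)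
  rw [← h_unique hi hli hl, h_unique hj (hli.trans hij) hl]

lemma exists_sensitiveCoords_blockHitting_subset_fiber {f : ι → κ} {x : ι → Bool}
    (hx : x ∉ blockHitting f) :
    ∃ k, sensitiveCoords (blockHitting f) x ⊆ ({i | f i = k} : Finset ι) := by
  obtain ⟨k, hk⟩ : ∃ k, ∀ i, f i = k → x i = false := by simpa [mem_blockHitting] using hx
  refine ⟨k, fun i hi => ?_⟩
  have h_flip : flipAt x i ∈ blockHitting f := by
    rw [mem_sensitiveCoords] at hi
    tauto
  obtain ⟨j, hjk, hj⟩ := mem_blockHitting.1 h_flip k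
  have hji : j = i := by
    by_contra hne
    rw [flipAt_of_ne x hne, hk j hjk] at hj
    contradiction
  simpa [← hji] using hjk

lemma card_sensitiveCoords_blockHitting_le {f : ι → κ} {d : ℕ} (hκ : Fintype.card κ ≤ d)
    (hfiber : ∀ k, #{i | f i = k} ≤ d) (x : ι → Bool) :
    #(sensitiveCoords (blockHitting f) x) ≤ d := by
  by_cases hx : x ∈ blockHitting f
  · exact (card_le_card_of_injOn f (fun _ _ => mem_univ _)
      (injOn_sensitiveCoords_blockHitting hx)).trans hκ
  · obtain ⟨k, hk⟩ := exists_sensitiveCoords_blockHitting_subset_fiber hx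
    exact (card_le_card hk).trans (hfiber k)

end BlockHitting

lemma exists_fin_surjective_card_fiber_le {n m : ℕ} (hmn : m ≤ n) (hn : n ≤ m * m) :
    ∃ f : Fin n → Fin m, f.Surjective ∧ ∀ k, #{i | f i = k} ≤ m := by
  have hm (i : Fin n) : 0 < m := Nat.pos_of_mul_pos_left (i.pos.trans_le hn)
  refine ⟨fun i => ⟨i % m, Nat.mod_lt _ (hm i)⟩, fun k => ?_, fun k => ?_⟩
  · exact ⟨k.castLE hmn, Fin.ext (Nat.mod_eq_of_lt k.isLt)⟩
  · suffices h_inj : Set.InjOn (fun i : Fin n => (i : ℕ) / m) {i | (i : ℕ) % m = k} by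
      simpa [Fin.ext_iff] using card_le_card_of_injOn (t := range m) _
        (fun i _ => mem_range.2 (Nat.div_lt_of_lt_mul (i.isLt.trans_le hn)))
        (h_inj.mono (by simp))
    intro i hi j hj hij
    exact Fin.ext (Nat.ext_div_mod hij (hi.trans hj.symm))

lemma Qgraph.exists_eq_flipAt_of_adj {n : ℕ} {x y : Fin n → Bool} (h : (Qgraph n).Adj x y) :
    ∃ i, y = flipAt x i := by
  obtain ⟨i, hi⟩ := card_eq_one.1 h
  have h_ne (j : Fin n) : x j ≠ y j ↔ j = i := by simpa using Finset.ext_iff.1 hi j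
  refine ⟨i, funext fun j => ?_⟩
  rcases eq_or_ne j i with rfl | hji
  · rw [flipAt_self, Bool.eq_not]
    exact ((h_ne j).2 rfl).symm
  · rw [flipAt_of_ne x hji]
    exact (not_not.1 (mt (h_ne j).1 hji)).symm

lemma Qgraph.maxDegree_induce_le {n d : ℕ} {S : Finset (Fin n → Bool)}
    (hS : ∀ x ∈ S, #{i | flipAt x i ∈ S} ≤ d) :
    ((Qgraph n).induce (↑S : Set (Fin n → Bool))).maxDegree ≤ d := by
  refine SimpleGraph.maxDegree_le_of_forall_degree_le _ _ fun x => le_trans ?_ (hS x x.2)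
  rw [← SimpleGraph.card_neighborFinset_eq_degree, ← card_map (Function.Embedding.subtype _)]
  suffices h_subset : _ ⊆ image (flipAt x) {i | flipAt x i ∈ S} from
    (card_le_card h_subset).trans card_image_le
  intro y hy
  obtain ⟨⟨y, hyS⟩, hxy, rfl⟩ := mem_map.1 hy
  have h_adj : (Qgraph n).Adj x y := by simpa using hxy
  obtain ⟨i, rfl⟩ := Qgraph.exists_eq_flipAt_of_adj h_adj
  exact mem_image_of_mem _ ((mem_filter_univ i).2 hyS)

lemma Qgraph.maxDegree_induce_evenPoints_symmDiff_le {n d : ℕ} {A : Finset (Fin n → Bool)}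
    (hA : ∀ x, #(sensitiveCoords A x) ≤ d) :
    ((Qgraph n).induce (↑(evenPoints (Fin n) ∆ A) : Set (Fin n → Bool))).maxDegree ≤ d :=
  Qgraph.maxDegree_induce_le fun x hx => (card_le_card fun _ hi =>
    mem_sensitiveCoords_of_mem_evenPoints_symmDiff hx (mem_filter.1 hi).2).trans (hA x)

lemma exists_induced_subgraph_maxDegree_le_of_sensitivity_le {n d : ℕ} (hn : 1 ≤ n)
    {A : Finset (Fin n → Bool)} (h_sum : |∑ x ∈ A, paritySign x| = 1)
    (h_sens : ∀ x, #(sensitiveCoords A x) ≤ d) :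
    ∃ S : Finset (Fin n → Bool), #S = 2 ^ (n - 1) + 1 ∧
      ((Qgraph n).induce (↑S : Set (Fin n → Bool))).maxDegree ≤ d := by
  have : Nonempty (Fin n) := ⟨⟨0, hn⟩⟩
  wlog h_neg : ∑ x ∈ A, paritySign x = -1 generalizing A with h_of_neg
  · have h_compl : ∑ x ∈ Aᶜ, paritySign x = -∑ x ∈ A, paritySign x := by
      rw [eq_neg_iff_add_eq_zero, sum_compl_add_sum, sum_paritySign_univ]
    have h_one := (eq_or_eq_neg_of_abs_eq h_sum).resolve_right h_neg
    exact h_of_neg (A := Aᶜ) (by rwa [h_compl, abs_neg])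
      (fun x => by simpa only [sensitiveCoords_compl] using h_sens x) (by rw [h_compl, h_one])
  refine ⟨evenPoints (Fin n) ∆ A, ?_, Qgraph.maxDegree_induce_evenPoints_symmDiff_le h_sens⟩
  have h_card := card_evenPoints_symmDiff A
  rw [h_neg, Fintype.card_fin, sub_neg_eq_add] at h_card
  exact_mod_cast h_card

/-- There exists an induced subgraph of `Q_n` on exactly `2^(n-1) + 1` vertices whose
maximum degree is at most `⌈√n⌉`. -/
theorem exists_induced_subgraph_maxDegree_le_ceil_sqrt (n : ℕ) (hn : 1 ≤ n) :
    ∃ S : Finset (Fin n → Bool), S.card = 2 ^ (n - 1) + 1 ∧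
      ((Qgraph n).induce (↑S : Set (Fin n → Bool))).maxDegree ≤ ⌈Real.sqrt n⌉₊ := by
  set m := ⌈Real.sqrt n⌉₊
  have hmn : m ≤ n := Nat.ceil_le.2 <| by
    rw [Real.sqrt_le_left (by positivity)]
    exact_mod_cast Nat.le_self_pow two_ne_zero n
  have hnm : n ≤ m * m := by
    have h_sqrt := (Real.sqrt_le_left (Nat.cast_nonneg m)).1 (Nat.le_ceil (Real.sqrt n))
    rw [← sq]
    exact_mod_cast h_sqrt
  obtain ⟨f, hf, hfiber⟩ := exists_fin_surjective_card_fiber_le hmn hnm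
  refine exists_induced_subgraph_maxDegree_le_of_sensitivity_le hn (A := blockHitting f) ?_
    (card_sensitiveCoords_blockHitting_le (Fintype.card_fin m).le hfiber)
  rw [sum_paritySign_blockHitting hf, abs_neg_one_pow]
end

section
/- Let G be a nonempty subgraph of the n-dimensional hypercube graph Q_n with vertex set V(G) and average degree d̄ = (Σ_{v ∈ V(G)} deg_G(v)) / |V(G)|. Then |V(G)| ≥ 2^d̄. -/
/-!
Splitting a vertex set `S` along one coordinate gives two slices of sizes `a` and `b`. At most
`min a b` edges join the slices, and concavity of the binary entropy bounds
`2 * min a b * log 2` by the amount by which `t * log t` at `a + b` exceeds its sum over `a` and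
`b`. Induction on the set of coordinates thus bounds the degree sum of the induced subgraph by
`#S * log #S / log 2`.
-/

open Finset Real

section Entropy

variable {a b p : ℝ}

lemma two_mul_mul_log_two_le_binEntropy (hp₀ : 0 ≤ p) (hp : p ≤ 2⁻¹) :
    2 * p * log 2 ≤ binEntropy p := by
  have hchord := strictConcave_binEntropy.concaveOn.right
    (show (2⁻¹ : ℝ) ∈ Set.Icc 0 1 by norm_num) (show (0 : ℝ) ∈ Set.Icc 0 1 by norm_num)
    (show 0 ≤ 2 * p by linarith) (show 0 ≤ 1 - 2 * p by linarith) (by ring)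
  have hmid : 2 * p * 2⁻¹ = p := by ring
  simpa [hmid] using hchord

lemma two_mul_min_mul_log_two_le_binEntropy (hp₀ : 0 ≤ p) (hp₁ : p ≤ 1) :
    2 * min p (1 - p) * log 2 ≤ binEntropy p := by
  rcases le_total p (1 - p) with hp | hp
  · rw [min_eq_left hp]
    exact two_mul_mul_log_two_le_binEntropy hp₀ (by linarith)
  · rw [min_eq_right hp, ← binEntropy_one_sub]
    exact two_mul_mul_log_two_le_binEntropy (by linarith) (by linarith)

lemma add_mul_binEntropy_div_add (hab : a + b ≠ 0) :
    (a + b) * binEntropy (a / (a + b)) = (a + b) * log (a + b) - a * log a - b * log b := by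
  have hcompl : 1 - a / (a + b) = b / (a + b) := by field_simp; ring
  have ha := negMulLog_mul (a / (a + b)) (a + b)
  have hb := negMulLog_mul (b / (a + b)) (a + b)
  rw [div_mul_cancel₀ _ hab] at ha hb
  have hsum : a / (a + b) + b / (a + b) = 1 := by rw [← add_div, div_self hab]
  rw [binEntropy_eq_negMulLog_add_negMulLog_one_sub, hcompl]
  simp only [negMulLog_eq_neg] at ha hb ⊢
  linear_combination -ha - hb + (a + b) * log (a + b) * hsum

lemma mul_log_add_mul_log_add_two_mul_min_mul_log_two_le (ha : 0 ≤ a) (hb : 0 ≤ b) :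
    a * log a + b * log b + 2 * min a b * log 2 ≤ (a + b) * log (a + b) := by
  rcases (add_nonneg ha hb).eq_or_lt with hab | hab
  · obtain rfl : a = 0 := by linarith
    obtain rfl : b = 0 := by linarith
    simp
  have hmin : (a + b) * min (a / (a + b)) (1 - a / (a + b)) = min a b := by
    rw [mul_min_of_nonneg _ _ hab.le, mul_one_sub, mul_div_cancel₀ _ hab.ne', add_sub_cancel_left]
  have hentropy := mul_le_mul_of_nonneg_left
    (two_mul_min_mul_log_two_le_binEntropy (p := a / (a + b)) (by positivity)
      (div_le_one_of_le₀ (by linarith) hab.le)) hab.le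
  rw [add_mul_binEntropy_div_add hab.ne'] at hentropy
  linear_combination hentropy - 2 * log 2 * hmin

end Entropy

section Cube

variable {ι : Type*}

/-- One of the two parts into which coordinate `i` cuts a set `S` of points of the cube: the
points whose `i`-th coordinate is `c`. -/
def coordSlice (S : Finset (ι → Bool)) (i : ι) (c : Bool) : Finset (ι → Bool) :=
  {x ∈ S | x i = c}

lemma card_coordSlice_true_add_card_coordSlice_false (S : Finset (ι → Bool)) (i : ι) :
    #(coordSlice S i true) + #(coordSlice S i false) = #S := by
  simpa [coordSlice] using card_filter_add_card_filter_not (s := S) (fun x => x i = true)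

variable [DecidableEq ι]

/-- The neighbour of the point `x` of the cube `ι → Bool` in direction `i`. -/
def flipCoord (i : ι) (x : ι → Bool) : ι → Bool := Function.update x i (!x i)

@[simp]
lemma flipCoord_self (i : ι) (x : ι → Bool) : flipCoord i x i = !x i := by
  simp [flipCoord]

lemma flipCoord_of_ne {i j : ι} (hij : i ≠ j) (x : ι → Bool) : flipCoord j x i = x i := by
  simp [flipCoord, hij]

lemma flipCoord_involutive (i : ι) : Function.Involutive (flipCoord i) := fun x => by
  simp [flipCoord]

variable [DecidableEq (ι → Bool)]

/-- The points of `S` whose neighbour in direction `i` is also in `S`. Each edge in direction `i`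
of the subgraph of the cube induced on `S` contributes both of its ends. -/
def pairedAlong (S : Finset (ι → Bool)) (i : ι) : Finset (ι → Bool) :=
  {x ∈ S | flipCoord i x ∈ S}

lemma coordSlice_pairedAlong_of_ne (S : Finset (ι → Bool)) {i j : ι} (hij : i ≠ j) (c : Bool) :
    coordSlice (pairedAlong S j) i c = pairedAlong (coordSlice S i c) j := by
  ext x
  simp only [coordSlice, pairedAlong, mem_filter, flipCoord_of_ne hij]
  tauto

lemma card_coordSlice_pairedAlong_le (S : Finset (ι → Bool)) (i : ι) (c d : Bool) :
    #(coordSlice (pairedAlong S i) i c) ≤ #(coordSlice S i d) := by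
  rcases Bool.eq_or_eq_not d c with rfl | rfl
  · exact card_le_card (filter_subset_filter _ (filter_subset _ S))
  · refine card_le_card_of_injOn (flipCoord i) (fun x hx => ?_)
      (flipCoord_involutive i).injective.injOn
    simp only [coordSlice, pairedAlong, mem_coe, mem_filter] at hx ⊢
    exact ⟨hx.1.2, by rw [flipCoord_self, hx.2]⟩

lemma card_pairedAlong_le_two_mul_min (S : Finset (ι → Bool)) (i : ι) :
    #(pairedAlong S i) ≤ 2 * min #(coordSlice S i true) #(coordSlice S i false) := by
  have hsplit := card_coordSlice_true_add_card_coordSlice_false (pairedAlong S i) i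
  have htrue := le_min (card_coordSlice_pairedAlong_le S i true true)
    (card_coordSlice_pairedAlong_le S i true false)
  have hfalse := le_min (card_coordSlice_pairedAlong_le S i false true)
    (card_coordSlice_pairedAlong_le S i false false)
  lia

lemma sum_card_pairedAlong_mul_log_two_le (T : Finset ι) (S : Finset (ι → Bool)) :
    (∑ i ∈ T, #(pairedAlong S i) : ℕ) * log 2 ≤ #S * log #S := by
  induction T using Finset.induction_on generalizing S with
  | empty => simpa using mul_nonneg (Nat.cast_nonneg _) (log_natCast_nonneg #S)
  | insert i T hi ih =>
    have hslices : ∑ j ∈ T, #(pairedAlong S j) =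
        ∑ j ∈ T, #(pairedAlong (coordSlice S i true) j) +
          ∑ j ∈ T, #(pairedAlong (coordSlice S i false) j) := by
      rw [← sum_add_distrib]
      refine sum_congr rfl fun j hj => ?_
      have hij : i ≠ j := (ne_of_mem_of_not_mem hj hi).symm
      rw [← coordSlice_pairedAlong_of_ne S hij, ← coordSlice_pairedAlong_of_ne S hij]
      exact (card_coordSlice_true_add_card_coordSlice_false (pairedAlong S j) i).symm
    have hcard : (#(coordSlice S i true) + #(coordSlice S i false) : ℝ) = #S :=
      mod_cast card_coordSlice_true_add_card_coordSlice_false S i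
    have hpaired : (#(pairedAlong S i) : ℝ) ≤
        2 * min (#(coordSlice S i true) : ℝ) #(coordSlice S i false) :=
      mod_cast card_pairedAlong_le_two_mul_min S i
    have hentropy := mul_log_add_mul_log_add_two_mul_min_mul_log_two_le
      (Nat.cast_nonneg (α := ℝ) #(coordSlice S i true))
      (Nat.cast_nonneg (α := ℝ) #(coordSlice S i false))
    rw [hcard] at hentropy
    have hlog := mul_le_mul_of_nonneg_right hpaired (log_nonneg one_le_two)
    rw [sum_insert hi, hslices]
    push_cast [add_mul] at ih ⊢
    linarith [ih (coordSlice S i true), ih (coordSlice S i false)]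

lemma sum_card_filter_flipCoord_mem (T : Finset ι) (S : Finset (ι → Bool)) :
    ∑ x ∈ S, #{i ∈ T | flipCoord i x ∈ S} = ∑ i ∈ T, #(pairedAlong S i) :=
  sum_card_bipartiteAbove_eq_sum_card_bipartiteBelow fun x i => flipCoord i x ∈ S

end Cube

section Qgraph

variable {n : ℕ}

lemma Qgraph_adj_iff_exists_eq_flipCoord {x y : Fin n → Bool} :
    (Qgraph n).Adj x y ↔ ∃ i, y = flipCoord i x := by
  change #{j | x j ≠ y j} = 1 ↔ _
  rw [card_eq_one]
  refine exists_congr fun i => ?_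
  simp only [Finset.ext_iff, mem_filter_univ, mem_singleton, funext_iff]
  refine forall_congr' fun j => ?_
  rcases eq_or_ne j i with rfl | hji
  · simp [Bool.eq_not, eq_comm]
  · simp [flipCoord_of_ne hji, hji, eq_comm]

lemma card_neighborSet_le_card_filter_flipCoord_mem (G : (Qgraph n).Subgraph)
    {S : Finset (Fin n → Bool)} (hS : G.verts ⊆ S) (v : Fin n → Bool) :
    Nat.card (G.neighborSet v) ≤ #{i | flipCoord i v ∈ S} := by
  have hsub : G.neighborSet v ⊆ ↑(image (flipCoord · v) {i | flipCoord i v ∈ S}) := by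
    intro w hvw
    obtain ⟨i, rfl⟩ := Qgraph_adj_iff_exists_eq_flipCoord.1 (G.adj_sub hvw)
    exact mem_coe.2 (mem_image_of_mem _ (mem_filter_univ _ |>.2 (hS (G.edge_vert hvw.symm))))
  calc Nat.card (G.neighborSet v)
      ≤ #(image (flipCoord · v) {i | flipCoord i v ∈ S}) := by
        simpa using Nat.card_mono (finite_toSet _) hsub
    _ ≤ #{i | flipCoord i v ∈ S} := card_image_le

lemma sum_card_neighborSet_mul_log_two_le (G : (Qgraph n).Subgraph)
    {S : Finset (Fin n → Bool)} (hS : G.verts ⊆ S) :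
    (∑ v ∈ S, Nat.card (G.neighborSet v) : ℕ) * log 2 ≤ #S * log #S := by
  have hdeg : ∑ v ∈ S, Nat.card (G.neighborSet v) ≤ ∑ i, #(pairedAlong S i) :=
    (sum_le_sum fun v _ => card_neighborSet_le_card_filter_flipCoord_mem G hS v).trans_eq
      (sum_card_filter_flipCoord_mem univ S)
  calc ((∑ v ∈ S, Nat.card (G.neighborSet v) : ℕ) : ℝ) * log 2
      ≤ (∑ i, #(pairedAlong S i) : ℕ) * log 2 := by gcongr
    _ ≤ #S * log #S := sum_card_pairedAlong_mul_log_two_le univ S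

end Qgraph

/-- Any nonempty subgraph `G` of `Q_n` with average degree `d̄` has at least `2^d̄`
vertices. -/
theorem card_ge_two_pow_avg_degree (n : ℕ) (G : (Qgraph n).Subgraph)
    (hne : G.verts.Nonempty) :
    (2 : ℝ) ^ ((∑ v ∈ (Set.toFinite G.verts).toFinset,
          (Nat.card (G.neighborSet v) : ℝ)) / (Nat.card G.verts : ℝ)) ≤
      (Nat.card G.verts : ℝ) := by
  have hcard : Nat.card G.verts = #(Set.toFinite G.verts).toFinset :=
    Nat.card_eq_card_finite_toFinset _
  have hpos : (0 : ℝ) < Nat.card G.verts :=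
    mod_cast (Set.ncard_pos (Set.toFinite G.verts)).2 hne
  have hsum := sum_card_neighborSet_mul_log_two_le G (Set.toFinite G.verts).coe_toFinset.superset
  rw [← hcard, mul_comm (Nat.card _ : ℝ)] at hsum
  rw [rpow_le_iff_le_log two_pos hpos, div_mul_eq_mul_div, div_le_iff₀ hpos]
  exact_mod_cast hsum
end

section
/- For every integer n ≥ 2, if G is an induced subgraph of the n-dimensional hypercube graph Q_n on exactly 2^(n-1) vertices such that for every direction i ∈ {1,…,n} there exist adjacent vertices x, x^(i) both in G (where x^(i) flips coordinate i), then Δ(G) > (1/2)·log₂ n − (1/2)·log₂ log₂ n + 1/2. -/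
/-!
Let `s` be the maximum degree of `G` and fix a direction `i`. Let `A` consist of the endpoints of
the `i`-edges inside `G` and `B` of the endpoints of the `i`-edges that avoid `G`. As `G` fills
half of the cube, `|A| = |B|`. For an `i`-edge inside `G`, at most `2s - 1` directions lead from one
of its ends to a neighbour in `G`, so every vertex of `A` has at least `n + 1 - 2s` neighbours in
`B`. Together with the `i`-edges, the subgraph induced on `A ∪ B` has average degree at least
`n + 2 - 2s`, and the edge-isoperimetric inequality forces `2|A| ≥ 2 ^ (n + 2 - 2s)`. Summing over
the directions and comparing with `∑ deg ≤ s * 2 ^ (n - 1)` gives `4n ≤ s * 4 ^ s`.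
-/

section Logarithm

open Real

lemma one_add_logb_two_le_logb_two_add {a b : ℝ} (ha : 0 < a) (hab : a ≤ b) :
    1 + logb 2 a ≤ logb 2 (a + b) := by
  rw [← logb_self_eq_one one_lt_two, ← logb_mul two_ne_zero ha.ne']
  exact logb_le_logb_of_le one_lt_two (by positivity) (by linarith)

lemma le_logb_two_one_add {t : ℝ} (ht₀ : 0 ≤ t) (ht₁ : t ≤ 1) : t ≤ logb 2 (1 + t) := by
  rw [le_logb_iff_rpow_le one_lt_two (by positivity)]
  have bernoulli := rpow_one_add_le_one_add_mul_self (s := 1) (by norm_num) ht₀ ht₁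
  rwa [one_add_one_eq_two, mul_one] at bernoulli

lemma mul_logb_two_add_le_mul_logb_two_add {a b : ℝ} (ha : 0 ≤ a) (hab : a ≤ b) (hb : 0 < b) :
    b * logb 2 b + a ≤ b * logb 2 (a + b) := by
  have hsplit : a + b = b * (1 + a / b) := by field_simp; ring
  have hslope : a / b ≤ logb 2 (1 + a / b) :=
    le_logb_two_one_add (by positivity) ((div_le_one hb).2 hab)
  calc b * logb 2 b + a = b * (logb 2 b + a / b) := by field_simp
    _ ≤ b * (logb 2 b + logb 2 (1 + a / b)) := by gcongr
    _ = b * logb 2 (a + b) := by rw [hsplit, logb_mul hb.ne' (by positivity)]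

lemma mul_logb_two_add_two_mul_min_le {a b : ℝ} (ha : 0 ≤ a) (hb : 0 ≤ b) :
    a * logb 2 a + b * logb 2 b + 2 * min a b ≤ (a + b) * logb 2 (a + b) := by
  wlog hab : a ≤ b generalizing a b
  · have hswap := this hb ha (le_of_not_ge hab)
    rw [add_comm b a, min_comm b a] at hswap
    linarith
  rw [min_eq_left hab]
  rcases ha.eq_or_lt with rfl | ha
  · simp
  have small := mul_le_mul_of_nonneg_left (one_add_logb_two_le_logb_two_add ha hab) ha.le
  have large := mul_logb_two_add_le_mul_logb_two_add ha.le hab (ha.trans_le hab)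
  linarith

lemma half_logb_sub_half_logb_logb_lt {x s : ℝ} (hx : 2 ≤ x) (h : 4 * x ≤ s * 4 ^ s) :
    1 / 2 * logb 2 x - 1 / 2 * logb 2 (logb 2 x) + 1 / 2 < s := by
  have hs : 0 < s := pos_of_mul_pos_left (by linarith) (by positivity : (0 : ℝ) ≤ 4 ^ s)
  have hlogx : 1 ≤ logb 2 x := by
    rwa [le_logb_iff_rpow_le one_lt_two (by linarith), rpow_one]
  have hloglog : 0 ≤ logb 2 (logb 2 x) := logb_nonneg one_lt_two hlogx
  have hlog : 2 + logb 2 x ≤ logb 2 s + 2 * s := by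
    have hfour : logb 2 4 = 2 := by
      rw [show (4 : ℝ) = 2 ^ (2 : ℝ) by norm_num, logb_rpow two_pos (by norm_num)]
    have := logb_le_logb_of_le one_lt_two (by positivity) h
    rwa [logb_mul (by norm_num) (by positivity), logb_mul hs.ne' (by positivity),
      logb_rpow_eq_mul_logb_of_pos (by norm_num), hfour, mul_comm s 2] at this
  rcases le_or_gt s (logb 2 x) with hsx | hsx
  · have := logb_le_logb_of_le one_lt_two hs hsx
    linarith
  · linarith

end Logarithm

namespace Hypercube

open Finset

variable {ι : Type*}

/-- The part of `T` in the facet `x j = b` of the cube. -/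
def face (j : ι) (b : Bool) (T : Finset (ι → Bool)) : Finset (ι → Bool) := {x ∈ T | x j = b}

lemma mem_face {j : ι} {b : Bool} {T : Finset (ι → Bool)} {x : ι → Bool} :
    x ∈ face j b T ↔ x ∈ T ∧ x j = b := mem_filter

lemma card_face_true_add_card_face_false (j : ι) (T : Finset (ι → Bool)) :
    #(face j true T) + #(face j false T) = #T := by
  simpa only [face, Bool.not_eq_true] using card_filter_add_card_filter_not (s := T) (· j = true)

variable [DecidableEq ι]

/-- The neighbour `x^(i)` of the vertex `x` of the cube `{0,1}^ι` in direction `i`. -/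
def flipAt (x : ι → Bool) (i : ι) : ι → Bool := Function.update x i (!x i)

lemma flipAt_apply_self (x : ι → Bool) (i : ι) : flipAt x i i = !x i := by
  simp [flipAt]

lemma flipAt_apply_of_ne (x : ι → Bool) {i j : ι} (h : j ≠ i) : flipAt x i j = x j := by
  simp [flipAt, h]

lemma flipAt_flipAt (x : ι → Bool) (i : ι) : flipAt (flipAt x i) i = x := by
  simp [flipAt]

lemma flipAt_comm (x : ι → Bool) (i j : ι) :
    flipAt (flipAt x i) j = flipAt (flipAt x j) i := by
  rcases eq_or_ne i j with rfl | hij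
  · rfl
  · simp [flipAt, hij, hij.symm, Function.update_comm hij]

lemma flipAt_injective (x : ι → Bool) : Function.Injective (flipAt x) := by
  intro i j hij
  by_contra hne
  have := congrFun hij i
  simp [flipAt_apply_self, flipAt_apply_of_ne x hne] at this

variable [Fintype ι]

/-- The starting points of the edges in direction `i` that lead from `A` to `B`. For `A = B` these
are both endpoints of each edge in direction `i` inside `A`. -/
def crossing (i : ι) (A B : Finset (ι → Bool)) : Finset (ι → Bool) := {x ∈ A | flipAt x i ∈ B}

lemma mem_crossing {i : ι} {A B : Finset (ι → Bool)} {x : ι → Bool} :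
    x ∈ crossing i A B ↔ x ∈ A ∧ flipAt x i ∈ B := mem_filter

lemma crossing_subset (i : ι) (A B : Finset (ι → Bool)) : crossing i A B ⊆ A := filter_subset _ _

lemma flipAt_mem_crossing {i : ι} {A B : Finset (ι → Bool)} {x : ι → Bool}
    (hx : x ∈ crossing i A B) : flipAt x i ∈ crossing i B A := by
  rw [mem_crossing, flipAt_flipAt]
  exact (mem_crossing.1 hx).symm

lemma card_crossing_comm (i : ι) (A B : Finset (ι → Bool)) :
    #(crossing i A B) = #(crossing i B A) :=
  card_bij' (fun x _ ↦ flipAt x i) (fun x _ ↦ flipAt x i) (fun _ ↦ flipAt_mem_crossing)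
    (fun _ ↦ flipAt_mem_crossing) (fun x _ ↦ flipAt_flipAt x i) (fun x _ ↦ flipAt_flipAt x i)

lemma card_crossing_le_min (i : ι) (A B : Finset (ι → Bool)) :
    #(crossing i A B) ≤ min #A #B :=
  le_min (card_le_card (crossing_subset i A B))
    (card_crossing_comm i A B ▸ card_le_card (crossing_subset i B A))

lemma card_crossing_add_card_crossing_compl (i : ι) (A B : Finset (ι → Bool)) :
    #(crossing i A B) + #(crossing i A Bᶜ) = #A := by
  simpa only [crossing, mem_compl] using card_filter_add_card_filter_not (s := A) (flipAt · i ∈ B)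

lemma card_crossing_compl_compl {S : Finset (ι → Bool)} (hS : #Sᶜ = #S) (i : ι) :
    #(crossing i Sᶜ Sᶜ) = #(crossing i S S) := by
  have inside := card_crossing_add_card_crossing_compl i S S
  have outside := card_crossing_add_card_crossing_compl i Sᶜ S
  have boundary := card_crossing_comm i S Sᶜ
  omega

lemma face_crossing_of_ne {i j : ι} (hij : j ≠ i) (b : Bool) (T : Finset (ι → Bool)) :
    face j b (crossing i T T) = crossing i (face j b T) (face j b T) := by
  ext x
  simp only [mem_face, mem_crossing, flipAt_apply_of_ne x hij]
  tauto

lemma face_crossing_self (j : ι) (b : Bool) (T : Finset (ι → Bool)) :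
    face j b (crossing j T T) = crossing j (face j b T) (face j (!b) T) := by
  ext x
  simp only [mem_face, mem_crossing, flipAt_apply_self, Bool.not_inj_iff]
  tauto

lemma card_crossing_self_le_two_mul_min (j : ι) (T : Finset (ι → Bool)) :
    #(crossing j T T) ≤ 2 * min #(face j true T) #(face j false T) := by
  rw [← card_face_true_add_card_face_false j, face_crossing_self, face_crossing_self,
    Bool.not_true, Bool.not_false, card_crossing_comm j (face j false T), ← two_mul]
  gcongr
  exact card_crossing_le_min j _ _

lemma sum_card_crossing_self_eq_add_face {j : ι} {J : Finset ι} (hj : j ∉ J)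
    (T : Finset (ι → Bool)) :
    ∑ i ∈ J, #(crossing i T T) =
      ∑ i ∈ J, #(crossing i (face j true T) (face j true T)) +
        ∑ i ∈ J, #(crossing i (face j false T) (face j false T)) := by
  rw [← sum_add_distrib]
  refine sum_congr rfl fun i hi ↦ ?_
  have hji : j ≠ i := (ne_of_mem_of_not_mem hi hj).symm
  rw [← face_crossing_of_ne hji, ← face_crossing_of_ne hji, card_face_true_add_card_face_false]

/-- The edge-isoperimetric inequality of the cube; every edge is counted from both ends. -/
theorem sum_card_crossing_self_le_card_mul_logb (J : Finset ι) (T : Finset (ι → Bool)) :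
    ((∑ i ∈ J, #(crossing i T T) : ℕ) : ℝ) ≤ #T * Real.logb 2 #T := by
  induction J using Finset.induction_on generalizing T with
  | empty =>
    rw [sum_empty, Nat.cast_zero]
    exact mul_nonneg (Nat.cast_nonneg _)
      (div_nonneg (Real.log_natCast_nonneg _) (Real.log_nonneg one_le_two))
  | insert j J hj ih =>
    have hcard : (#(face j true T) : ℝ) + #(face j false T) = #T := mod_cast
      card_face_true_add_card_face_false j T
    have hdir : (#(crossing j T T) : ℝ) ≤ 2 * min (#(face j true T) : ℝ) #(face j false T) :=
      mod_cast card_crossing_self_le_two_mul_min j T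
    have hreal := mul_logb_two_add_two_mul_min_le (Nat.cast_nonneg #(face j true T))
      (Nat.cast_nonneg #(face j false T))
    rw [hcard] at hreal
    rw [sum_insert hj, sum_card_crossing_self_eq_add_face hj, Nat.cast_add, Nat.cast_add]
    linarith [ih (face j true T), ih (face j false T)]

/-- The number of neighbours of `x` in `S`; the vertex `x` itself need not lie in `S`. -/
def degreeInto (S : Finset (ι → Bool)) (x : ι → Bool) : ℕ := #{i | flipAt x i ∈ S}

lemma sum_degreeInto (A B : Finset (ι → Bool)) :
    ∑ x ∈ A, degreeInto B x = ∑ i, #(crossing i A B) := by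
  simp only [degreeInto, crossing, card_filter]
  exact sum_comm

lemma sum_degreeInto_comm (A B : Finset (ι → Bool)) :
    ∑ x ∈ A, degreeInto B x = ∑ x ∈ B, degreeInto A x := by
  simp only [sum_degreeInto, card_crossing_comm _ A B]

lemma degreeInto_union {A B : Finset (ι → Bool)} (h : Disjoint A B) (x : ι → Bool) :
    degreeInto (A ∪ B) x = degreeInto A x + degreeInto B x := by
  simp only [degreeInto, mem_union, filter_or]
  exact card_union_of_disjoint (disjoint_filter.2 fun _ _ hA hB ↦ disjoint_left.1 h hA hB)

lemma sum_degreeInto_union {A B : Finset (ι → Bool)} (h : Disjoint A B) :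
    ∑ x ∈ A ∪ B, degreeInto (A ∪ B) x =
      ∑ x ∈ A, degreeInto A x + ∑ x ∈ B, degreeInto B x + 2 * ∑ x ∈ A, degreeInto B x := by
  simp only [sum_union h, degreeInto_union h, sum_add_distrib, sum_degreeInto_comm B A]
  ring

lemma card_le_sum_degreeInto_self {A : Finset (ι → Bool)} {i : ι}
    (h : ∀ x ∈ A, flipAt x i ∈ A) : #A ≤ ∑ x ∈ A, degreeInto A x := by
  rw [card_eq_sum_ones]
  exact sum_le_sum fun x hx ↦ card_pos.2 ⟨i, mem_filter.2 ⟨mem_univ i, h x hx⟩⟩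

lemma two_pow_le_card_mul_two_pow {T : Finset (ι → Bool)} (hT : T.Nonempty) {d e : ℕ}
    (h : #T * d ≤ ∑ x ∈ T, degreeInto T x + #T * e) : 2 ^ d ≤ #T * 2 ^ e := by
  have hpos : (0 : ℝ) < #T := mod_cast hT.card_pos
  have hiso := sum_card_crossing_self_le_card_mul_logb univ T
  rw [← sum_degreeInto] at hiso
  have hlog : (d : ℝ) ≤ Real.logb 2 (#T * 2 ^ e) := by
    rw [Real.logb_mul hpos.ne' (by positivity), Real.logb_pow,
      Real.logb_self_eq_one one_lt_two, mul_one]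
    refine le_of_mul_le_mul_left ?_ hpos
    have hcast : (#T : ℝ) * d ≤ (∑ x ∈ T, degreeInto T x : ℕ) + #T * e := mod_cast h
    linarith
  rw [Real.le_logb_iff_rpow_le one_lt_two (by positivity), Real.rpow_natCast] at hlog
  exact_mod_cast hlog

/-- The directions in which `x` or `flipAt x i` has a neighbour in `S` overlap in `i`, which gains
the `+ 1`. -/
lemma card_add_one_le_degreeInto_crossing_compl {S : Finset (ι → Bool)} {i : ι} {x : ι → Bool}
    (hx : x ∈ crossing i S S) :
    Fintype.card ι + 1 ≤
      degreeInto (crossing i Sᶜ Sᶜ) x + (degreeInto S x + degreeInto S (flipAt x i)) := by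
  obtain ⟨hxS, hxiS⟩ := mem_crossing.1 hx
  let N (y : ι → Bool) : Finset ι := {j | flipAt y j ∈ S}
  have hinter : 0 < #(N x ∩ N (flipAt x i)) :=
    card_pos.2 ⟨i, by simp [N, flipAt_flipAt, hxS, hxiS]⟩
  have hdeg : degreeInto (crossing i Sᶜ Sᶜ) x = #(N x ∪ N (flipAt x i))ᶜ := by
    rw [degreeInto]
    congr 1
    ext j
    simp [N, mem_crossing, flipAt_comm x i j]
  have hunion : #(N x ∪ N (flipAt x i)) + #(N x ∩ N (flipAt x i)) =
      degreeInto S x + degreeInto S (flipAt x i) := card_union_add_card_inter _ _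
  have htotal := card_add_card_compl (N x ∪ N (flipAt x i))
  omega

lemma card_mul_le_sum_degreeInto_crossing_compl {S : Finset (ι → Bool)} {s : ℕ}
    (hs : ∀ x ∈ S, degreeInto S x ≤ s) (i : ι) :
    #(crossing i S S) * (Fintype.card ι + 1) ≤
      ∑ x ∈ crossing i S S, degreeInto (crossing i Sᶜ Sᶜ) x + #(crossing i S S) * (2 * s) := by
  rw [← smul_eq_mul, ← smul_eq_mul, ← sum_const, ← sum_const, ← sum_add_distrib]
  refine sum_le_sum fun x hx ↦ ?_
  have hmem := mem_crossing.1 hx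
  linarith [card_add_one_le_degreeInto_crossing_compl hx, hs x hmem.1, hs _ hmem.2]

lemma two_pow_le_card_crossing_self_mul {S : Finset (ι → Bool)} (hS : #Sᶜ = #S) {s : ℕ}
    (hs : ∀ x ∈ S, degreeInto S x ≤ s) {i : ι} (hi : (crossing i S S).Nonempty) :
    2 ^ (Fintype.card ι + 1) ≤ #(crossing i S S) * 4 ^ s := by
  set A := crossing i S S
  set B := crossing i Sᶜ Sᶜ
  have hdisj : Disjoint A B :=
    disjoint_compl_right.mono (crossing_subset i S S) (crossing_subset i Sᶜ Sᶜ)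
  have hcardB : #B = #A := card_crossing_compl_compl hS i
  have hcard : #(A ∪ B) = 2 * #A := by rw [card_union_of_disjoint hdisj, hcardB, two_mul]
  have hA : #A ≤ ∑ x ∈ A, degreeInto A x :=
    card_le_sum_degreeInto_self fun _ ↦ flipAt_mem_crossing
  have hB : #B ≤ ∑ x ∈ B, degreeInto B x :=
    card_le_sum_degreeInto_self fun _ ↦ flipAt_mem_crossing
  have hAB := card_mul_le_sum_degreeInto_crossing_compl hs i
  have havg : #(A ∪ B) * (Fintype.card ι + 2) ≤
      ∑ x ∈ A ∪ B, degreeInto (A ∪ B) x + #(A ∪ B) * (2 * s) := by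
    rw [sum_degreeInto_union hdisj, hcard]
    linarith
  have hpow := two_pow_le_card_mul_two_pow hi.inl havg
  rw [hcard, pow_mul, pow_succ, show 2 ^ 2 = 4 from rfl] at hpow
  linarith

theorem four_mul_card_le_mul_four_pow {S : Finset (ι → Bool)} (hS : #Sᶜ = #S) {s : ℕ}
    (hs : ∀ x ∈ S, degreeInto S x ≤ s) (hdir : ∀ i, (crossing i S S).Nonempty) :
    4 * Fintype.card ι ≤ s * 4 ^ s := by
  have hcard : 2 * #S = 2 ^ Fintype.card ι := by
    have := card_add_card_compl S
    rw [hS, Fintype.card_fun, Fintype.card_bool] at this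
    linarith
  refine Nat.le_of_mul_le_mul_left ?_ (by rw [hcard]; positivity : 0 < 2 * #S)
  calc 2 * #S * (4 * Fintype.card ι)
      = 2 * ∑ _i : ι, 2 ^ (Fintype.card ι + 1) := by
        rw [sum_const, card_univ, smul_eq_mul, pow_succ, ← hcard]; ring
    _ ≤ 2 * ∑ i, #(crossing i S S) * 4 ^ s := by
        gcongr with i
        exact two_pow_le_card_crossing_self_mul hS hs (hdir i)
    _ = 2 * (∑ x ∈ S, degreeInto S x) * 4 ^ s := by rw [← sum_mul, sum_degreeInto, mul_assoc]
    _ ≤ 2 * (#S * s) * 4 ^ s := by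
        gcongr
        exact sum_le_card_nsmul S _ s hs
    _ = 2 * #S * (s * 4 ^ s) := by ring

lemma Qgraph_adj_iff {n : ℕ} {x y : Fin n → Bool} :
    (Qgraph n).Adj x y ↔ ∃ i, y = flipAt x i := by
  simp only [Qgraph, card_eq_one, flipAt, Function.eq_update_iff]
  refine exists_congr fun i ↦ ?_
  simp only [Finset.ext_iff, mem_filter, mem_univ, true_and, mem_singleton, Bool.eq_not]
  grind

lemma degree_induce_Qgraph {n : ℕ} (S : Finset (Fin n → Bool)) (x : (S : Set (Fin n → Bool))) :
    ((Qgraph n).induce (S : Set (Fin n → Bool))).degree x = degreeInto S x := by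
  symm
  refine card_bij (fun i hi ↦ ⟨flipAt x i, (mem_filter.1 hi).2⟩) ?_ ?_ ?_
  · intro i hi
    simp [Qgraph_adj_iff]
  · intro i _ j _ hij
    exact flipAt_injective x (congrArg Subtype.val hij)
  · rintro ⟨y, hy⟩ hxy
    obtain ⟨i, rfl⟩ : ∃ i, y = flipAt x i := by simpa [Qgraph_adj_iff] using hxy
    exact ⟨i, by simpa using hy, rfl⟩

end Hypercube

/-- If `G` is an induced subgraph of `Q_n` on exactly `2^(n-1)` vertices containing an
edge in every direction `i`, then `Δ(G) > (1/2)·log₂ n − (1/2)·log₂ log₂ n + 1/2`. -/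
theorem chung_half_cube_lower_bound (n : ℕ) (hn : 2 ≤ n) (S : Finset (Fin n → Bool))
    (hS : S.card = 2 ^ (n - 1))
    (hdir : ∀ i : Fin n, ∃ x : Fin n → Bool,
      x ∈ S ∧ Function.update x i (!x i) ∈ S) :
    (1 / 2) * Real.logb 2 n - (1 / 2) * Real.logb 2 (Real.logb 2 n) + 1 / 2 <
      (((Qgraph n).induce (↑S : Set (Fin n → Bool))).maxDegree : ℝ) := by
  have hhalf : Sᶜ.card = S.card := by
    rw [Finset.card_compl, hS, Fintype.card_fun, Fintype.card_bool, Fintype.card_fin]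
    have : 2 ^ n = 2 * 2 ^ (n - 1) := (mul_pow_sub_one (by lia) 2).symm
    lia
  have hdeg (x) (hx : x ∈ S) : Hypercube.degreeInto S x ≤
      ((Qgraph n).induce (↑S : Set (Fin n → Bool))).maxDegree :=
    Hypercube.degree_induce_Qgraph S ⟨x, hx⟩ ▸ SimpleGraph.degree_le_maxDegree _ _
  have hcross (i) : (Hypercube.crossing i S S).Nonempty :=
    (hdir i).imp fun _ ↦ Hypercube.mem_crossing.2
  have hbound := Hypercube.four_mul_card_le_mul_four_pow hhalf hdeg hcross
  rw [Fintype.card_fin] at hbound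
  refine half_logb_sub_half_logb_logb_lt (mod_cast hn) ?_
  rw [Real.rpow_natCast]
  exact_mod_cast hbound
end
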